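/- arXiv:1705.01433 — 2 statements merged into one kernel-verified Lean document; each statement's English description precedes it below -/
import Mathlib

section
/- Consider a mean-payoff bidding game G = (V, E, w) and a vertex v ∈ V. If Min's initial budget exceeds Thresh(v), then Min has a memoryless strategy that guarantees a nonpositive mean-payoff value from v, that is, a strategy whose bid and chosen move at each round depend only on the current vertex, Min's current budget, and the current energy level. -/
open scoped Classical

/-! ### Bidding games: the basic model -/

/-- One round of a bidding game: the vertex the token was moved to, the winning bid,
and whether Player 1 won the bidding. -/
structure BidRound (V : Type) where
  dest : V
  bid : ℝ
  p1Won : Bool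

/-- A history: the initial vertex together with the list of rounds played so far. -/
structure Hist (V : Type) where
  init : V
  rounds : List (BidRound V)

/-- The vertex currently occupied by the token. -/
def Hist.cur {V : Type} (h : Hist V) : V :=
  h.rounds.getLast?.elim h.init BidRound.dest

/-- The net payment of Player 1 so far (bids paid upon winning minus bids received). -/
def Hist.pay1 {V : Type} (h : Hist V) : ℝ :=
  (h.rounds.map (fun r => if r.p1Won then r.bid else -r.bid)).sum

/-- The net payment of Player 2 so far. -/
def Hist.pay2 {V : Type} (h : Hist V) : ℝ := -h.pay1

/-- The sum of the weights of all vertices visited so far (including the current one). -/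
def Hist.energyAll {V : Type} (w : V → ℤ) (h : Hist V) : ℤ :=
  w h.init + (h.rounds.map (fun r => w r.dest)).sum

/-- A strategy: maps a history to a bid and the vertex to move to upon winning. -/
def Strat (V : Type) := Hist V → ℝ × V

/-- A tie-breaking mechanism: decides at each history whether Player 1 wins a tie. -/
def TieBreak (V : Type) := Hist V → Bool

/-- A bidding game: a finite directed graph in which every vertex has an outgoing edge. -/
structure BiddingGame (V : Type) [Fintype V] where
  E : V → V → Prop
  total : ∀ v, ∃ u, E v u

/-- One round of play: both players bid; the higher bidder (Player 1 upon a tie won by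
the tie-breaking mechanism) pays his bid to the other player and moves the token. -/
noncomputable def extend {V : Type} (tb : TieBreak V) (f1 f2 : Strat V) (h : Hist V) : Hist V :=
  if (f2 h).1 < (f1 h).1 ∨ ((f1 h).1 = (f2 h).1 ∧ tb h = true) then
    ⟨h.init, h.rounds ++ [⟨(f1 h).2, (f1 h).1, true⟩]⟩
  else
    ⟨h.init, h.rounds ++ [⟨(f2 h).2, (f2 h).1, false⟩]⟩

/-- The history after `n` rounds, starting at `v0`. -/
noncomputable def play {V : Type} (tb : TieBreak V) (f1 f2 : Strat V) (v0 : V) : ℕ → Hist V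
  | 0 => ⟨v0, []⟩
  | n + 1 => extend tb f1 f2 (play tb f1 f2 v0 n)

/-- The vertex occupied after `n` rounds. -/
noncomputable def visit {V : Type} (tb : TieBreak V) (f1 f2 : Strat V) (v0 : V) (n : ℕ) : V :=
  (play tb f1 f2 v0 n).cur

/-- The energy (sum of weights) of the prefix of length `n` of the outcome. -/
noncomputable def energy {V : Type} (w : V → ℤ) (tb : TieBreak V) (f1 f2 : Strat V) (v0 : V)
    (n : ℕ) : ℤ :=
  ∑ i ∈ Finset.range n, w (visit tb f1 f2 v0 i)

/-- Player 1's strategy is legal w.r.t. the initial budget `B`: along any play, his bids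
are nonnegative, never exceed his current budget, and his moves follow edges. -/
def Legal1 {V : Type} [Fintype V] (G : BiddingGame V) (f1 : Strat V) (B : ℝ) : Prop :=
  ∀ (tb : TieBreak V) (f2 : Strat V) (v0 : V) (n : ℕ),
    0 ≤ (f1 (play tb f1 f2 v0 n)).1 ∧
    (f1 (play tb f1 f2 v0 n)).1 ≤ B - (play tb f1 f2 v0 n).pay1 ∧
    G.E (play tb f1 f2 v0 n).cur (f1 (play tb f1 f2 v0 n)).2

/-- Player 2's strategy is legal w.r.t. the initial budget `B`. -/
def Legal2 {V : Type} [Fintype V] (G : BiddingGame V) (f2 : Strat V) (B : ℝ) : Prop :=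
  ∀ (tb : TieBreak V) (f1 : Strat V) (v0 : V) (n : ℕ),
    0 ≤ (f2 (play tb f1 f2 v0 n)).1 ∧
    (f2 (play tb f1 f2 v0 n)).1 ≤ B - (play tb f1 f2 v0 n).pay2 ∧
    G.E (play tb f1 f2 v0 n).cur (f2 (play tb f1 f2 v0 n)).2

/-- A memoryless strategy: its action depends only on the current vertex and the
player's current budget (equivalently, the net payments so far). -/
def Memoryless {V : Type} (f : Strat V) : Prop :=
  ∀ h h' : Hist V, h.cur = h'.cur → h.pay1 = h'.pay1 → f h = f h'

/-- A memoryless strategy in a mean-payoff game: its action depends only on the current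
vertex, the player's current budget, and the current energy level. -/
def MemorylessE {V : Type} (w : V → ℤ) (f : Strat V) : Prop :=
  ∀ h h' : Hist V, h.cur = h'.cur → h.pay1 = h'.pay1 →
    h.energyAll w = h'.energyAll w → f h = f h'

/-- A constant-memory strategy for Player 2 (Max): the action depends only on the current
vertex, Player 2's current budget, the current energy level, and a memory state ranging
over a finite set (of size independent of the history), updated round by round. -/
def FiniteMemory2 {V : Type} (w : V → ℤ) (f : Strat V) (B : ℝ) : Prop :=
  ∃ (M : Type) (_ : Fintype M) (m0 : M) (upd : M → BidRound V → M)
    (act : V → ℝ → ℤ → M → ℝ × V),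
    ∀ h : Hist V, f h = act h.cur (B - h.pay2) (h.energyAll w) (h.rounds.foldl upd m0)

/-- Strong connectivity of the arena. -/
def StronglyConnected {V : Type} [Fintype V] (G : BiddingGame V) : Prop :=
  ∀ v u : V, Relation.ReflTransGen G.E v u

/-! ### Richman games -/

/-- The successors of `v`. -/
noncomputable def BiddingGame.adj {V : Type} [Fintype V] (G : BiddingGame V) (v : V) :
    Finset V :=
  Finset.univ.filter (fun u => G.E v u)

lemma BiddingGame.adj_nonempty {V : Type} [Fintype V] (G : BiddingGame V) (v : V) :
    (G.adj v).Nonempty := by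
  obtain ⟨u, hu⟩ := G.total v
  exact ⟨u, by simpa [BiddingGame.adj] using hu⟩

/-- The Richman function `R(v, i)`. -/
noncomputable def Rfun {V : Type} [Fintype V] (G : BiddingGame V) (vR vS : V) :
    ℕ → V → ℝ
  | 0, v => if v = vR then 0 else 1
  | i + 1, v =>
      if v = vR then 0
      else if v = vS then 1
      else ((G.adj v).sup' (G.adj_nonempty v) (Rfun G vR vS i) +
            (G.adj v).inf' (G.adj_nonempty v) (Rfun G vR vS i)) / 2

/-- The limit Richman function `R(v) = lim_i R(v, i)`; since `i ↦ R(v, i)` is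
nonincreasing, the limit equals the infimum. -/
noncomputable def Rlim {V : Type} [Fintype V] (G : BiddingGame V) (vR vS : V)
    (v : V) : ℝ :=
  ⨅ i : ℕ, Rfun G vR vS i v

/-- Player 1 wins an outcome of a Richman game: `vR` is reached, and `vS` is not
reached before that (the game ends once a target is reached). -/
def Win1Richman {V : Type} (tb : TieBreak V) (f1 f2 : Strat V) (v0 vR vS : V) : Prop :=
  ∃ n, visit tb f1 f2 v0 n = vR ∧ ∀ m < n, visit tb f1 f2 v0 m ≠ vS

/-- Player 2 wins an outcome of a Richman game: `vS` is reached first, or no target is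
ever reached. -/
def Win2Richman {V : Type} (tb : TieBreak V) (f1 f2 : Strat V) (v0 vR vS : V) : Prop :=
  (∃ n, visit tb f1 f2 v0 n = vS ∧ ∀ m < n, visit tb f1 f2 v0 m ≠ vR) ∨
  (∀ n, visit tb f1 f2 v0 n ≠ vR ∧ visit tb f1 f2 v0 n ≠ vS)

/-- Player 1 has a winning strategy in the Richman game from `v0` with budget `B`. -/
def Win1RichmanFrom {V : Type} [Fintype V] (G : BiddingGame V) (vR vS v0 : V)
    (B : ℝ) : Prop :=
  ∀ tb : TieBreak V, ∃ f1 : Strat V, Legal1 G f1 B ∧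
    ∀ f2 : Strat V, Legal2 G f2 (1 - B) → Win1Richman tb f1 f2 v0 vR vS

/-- Player 2 has a winning strategy in the Richman game from `v0` with budget `B`. -/
def Win2RichmanFrom {V : Type} [Fintype V] (G : BiddingGame V) (vR vS v0 : V)
    (B : ℝ) : Prop :=
  ∀ tb : TieBreak V, ∃ f2 : Strat V, Legal2 G f2 B ∧
    ∀ f1 : Strat V, Legal1 G f1 (1 - B) → Win2Richman tb f1 f2 v0 vR vS

/-- `t` is a threshold budget at `v` in the Richman game. -/
def IsThreshRichman {V : Type} [Fintype V] (G : BiddingGame V) (vR vS v : V)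
    (t : ℝ) : Prop :=
  (∀ B : ℝ, B ≤ 1 → t < B → Win1RichmanFrom G vR vS v B) ∧
  (∀ B : ℝ, B ≤ 1 → 1 - t < B → Win2RichmanFrom G vR vS v B)

/-! ### Richman games with target sets -/

def Win1RichmanSet {V : Type} (tb : TieBreak V) (f1 f2 : Strat V) (v0 : V)
    (R S : Set V) : Prop :=
  ∃ n, visit tb f1 f2 v0 n ∈ R ∧ ∀ m < n, visit tb f1 f2 v0 m ∉ S

def Win2RichmanSet {V : Type} (tb : TieBreak V) (f1 f2 : Strat V) (v0 : V)
    (R S : Set V) : Prop :=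
  (∃ n, visit tb f1 f2 v0 n ∈ S ∧ ∀ m < n, visit tb f1 f2 v0 m ∉ R) ∨
  (∀ n, visit tb f1 f2 v0 n ∉ R ∧ visit tb f1 f2 v0 n ∉ S)

/-- `t` is a threshold budget at `v` in the Richman game with target sets `R` and `S`. -/
def IsThreshRichmanSet {V : Type} [Fintype V] (G : BiddingGame V) (R S : Set V)
    (v : V) (t : ℝ) : Prop :=
  (∀ B : ℝ, B ≤ 1 → t < B → ∀ tb : TieBreak V, ∃ f1 : Strat V, Legal1 G f1 B ∧
      ∀ f2 : Strat V, Legal2 G f2 (1 - B) → Win1RichmanSet tb f1 f2 v R S) ∧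
  (∀ B : ℝ, B ≤ 1 → 1 - t < B → ∀ tb : TieBreak V, ∃ f2 : Strat V, Legal2 G f2 B ∧
      ∀ f1 : Strat V, Legal1 G f1 (1 - B) → Win2RichmanSet tb f1 f2 v R S)

/-! ### Reachability games -/

/-- `t` is a threshold budget at `v` in the reachability game with target set `T`. -/
def IsThreshReach {V : Type} [Fintype V] (G : BiddingGame V) (T : Set V) (v : V)
    (t : ℝ) : Prop :=
  (∀ B : ℝ, B ≤ 1 → t < B → ∀ tb : TieBreak V, ∃ f1 : Strat V, Legal1 G f1 B ∧
      ∀ f2 : Strat V, Legal2 G f2 (1 - B) → ∃ n, visit tb f1 f2 v n ∈ T) ∧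
  (∀ B : ℝ, B ≤ 1 → 1 - t < B → ∀ tb : TieBreak V, ∃ f2 : Strat V, Legal2 G f2 B ∧
      ∀ f1 : Strat V, Legal1 G f1 (1 - B) → ∀ n, visit tb f1 f2 v n ∉ T)

/-! ### Parity games -/

/-- Player 1 wins an outcome of a parity game: the maximal parity index visited
infinitely often is odd. -/
def Win1Parity {V : Type} (p : V → ℕ) (tb : TieBreak V) (f1 f2 : Strat V)
    (v0 : V) : Prop :=
  Odd (sSup {k : ℕ | ∀ N : ℕ, ∃ n ≥ N, p (visit tb f1 f2 v0 n) = k})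

def Win1ParityFrom {V : Type} [Fintype V] (G : BiddingGame V) (p : V → ℕ) (v0 : V)
    (B : ℝ) : Prop :=
  ∀ tb : TieBreak V, ∃ f1 : Strat V, Legal1 G f1 B ∧
    ∀ f2 : Strat V, Legal2 G f2 (1 - B) → Win1Parity p tb f1 f2 v0

def Win2ParityFrom {V : Type} [Fintype V] (G : BiddingGame V) (p : V → ℕ) (v0 : V)
    (B : ℝ) : Prop :=
  ∀ tb : TieBreak V, ∃ f2 : Strat V, Legal2 G f2 B ∧
    ∀ f1 : Strat V, Legal1 G f1 (1 - B) → ¬ Win1Parity p tb f1 f2 v0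

/-- `t` is a threshold budget at `v` in the parity game. -/
def IsThreshParity {V : Type} [Fintype V] (G : BiddingGame V) (p : V → ℕ) (v : V)
    (t : ℝ) : Prop :=
  (∀ B : ℝ, B ≤ 1 → t < B → Win1ParityFrom G p v B) ∧
  (∀ B : ℝ, B ≤ 1 → 1 - t < B → Win2ParityFrom G p v B)

/-! ### Mean-payoff games (Min is Player 1, Max is Player 2) -/

/-- The mean-payoff value of the outcome. -/
noncomputable def mpval {V : Type} (w : V → ℤ) (tb : TieBreak V) (f1 f2 : Strat V)
    (v0 : V) : ℝ :=
  Filter.liminf (fun n : ℕ => (energy w tb f1 f2 v0 n : ℝ) / n) Filter.atTop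

/-- Min can guarantee a nonpositive mean-payoff value from `v0` with budget `B`. -/
def MinWinsFrom {V : Type} [Fintype V] (G : BiddingGame V) (w : V → ℤ) (v0 : V)
    (B : ℝ) : Prop :=
  ∀ tb : TieBreak V, ∃ f1 : Strat V, Legal1 G f1 B ∧
    ∀ f2 : Strat V, Legal2 G f2 (1 - B) → mpval w tb f1 f2 v0 ≤ 0

/-- Max can guarantee a strictly positive mean-payoff value from `v0` with budget `B`. -/
def MaxWinsFrom {V : Type} [Fintype V] (G : BiddingGame V) (w : V → ℤ) (v0 : V)
    (B : ℝ) : Prop :=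
  ∀ tb : TieBreak V, ∃ f2 : Strat V, Legal2 G f2 B ∧
    ∀ f1 : Strat V, Legal1 G f1 (1 - B) → 0 < mpval w tb f1 f2 v0

/-- `t` is a threshold budget at `v` in the mean-payoff game. -/
def IsThreshMP {V : Type} [Fintype V] (G : BiddingGame V) (w : V → ℤ) (v : V)
    (t : ℝ) : Prop :=
  (∀ B : ℝ, B ≤ 1 → t < B → MinWinsFrom G w v B) ∧
  (∀ B : ℝ, B ≤ 1 → 1 - t < B → MaxWinsFrom G w v B)

/-! ### The split graph `G^u` and the weighted Richman function -/

/-- Edges of `G^u`: `u` is split into `u_s = Sum.inl u` (keeping the outgoing edges of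
`u`, with no incoming edges) and `u_t = Sum.inr ()` (receiving the edges into `u`, with
no outgoing edges). -/
def splitE {V : Type} [Fintype V] (G : BiddingGame V) (u : V) :
    V ⊕ Unit → V ⊕ Unit → Prop
  | Sum.inl v, Sum.inl x => G.E v x ∧ x ≠ u
  | Sum.inl v, Sum.inr _ => G.E v u
  | Sum.inr _, _ => False

/-- The successors in `G^u` of a vertex `v ∈ V` (i.e. of `Sum.inl v`). -/
noncomputable def succu {V : Type} [Fintype V] (G : BiddingGame V) (u v : V) :
    Finset (V ⊕ Unit) :=
  Finset.univ.filter (fun y => splitE G u (Sum.inl v) y)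

lemma succu_nonempty {V : Type} [Fintype V] (G : BiddingGame V) (u v : V) :
    (succu G u v).Nonempty := by
  obtain ⟨x, hx⟩ := G.total v
  by_cases hxu : x = u
  · refine ⟨Sum.inr (), ?_⟩
    simp only [succu, Finset.mem_filter, Finset.mem_univ, true_and]
    exact show G.E v u from hxu ▸ hx
  · refine ⟨Sum.inl x, ?_⟩
    simp only [succu, Finset.mem_filter, Finset.mem_univ, true_and]
    exact show G.E v x ∧ x ≠ u from ⟨hx, hxu⟩

/-- `W(v⁺)`: the maximal value of `W` over the `G^u`-successors of `v`. -/
noncomputable def supWu {V : Type} [Fintype V] (G : BiddingGame V) (u : V)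
    (W : V ⊕ Unit → ℝ) (v : V) : ℝ :=
  (succu G u v).sup' (succu_nonempty G u v) W

/-- `W(v⁻)`: the minimal value of `W` over the `G^u`-successors of `v`. -/
noncomputable def infWu {V : Type} [Fintype V] (G : BiddingGame V) (u : V)
    (W : V ⊕ Unit → ℝ) (v : V) : ℝ :=
  (succu G u v).inf' (succu_nonempty G u v) W

/-- `W` is a weighted Richman function for the weights `w`, split at `u`:
`W(u_t) = 0` and `W(v) = (W(v⁺) + W(v⁻))/2 + w(v)` for every `v ∈ V`
(`Sum.inl v` represents `v`, in particular `Sum.inl u` is `u_s`). -/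
def IsWRichman {V : Type} [Fintype V] (G : BiddingGame V) (w : V → ℝ) (u : V)
    (W : V ⊕ Unit → ℝ) : Prop :=
  W (Sum.inr ()) = 0 ∧
  ∀ v : V, W (Sum.inl v) = (supWu G u W v + infWu G u W v) / 2 + w v

/-- Projection of `G^u`-vertices back to vertices of `G`. -/
def projU {V : Type} (u : V) : V ⊕ Unit → V := Sum.elim id (fun _ => u)

/-- `w_M`: the maximal absolute value of `W` over `V`. -/
noncomputable def wMax {V : Type} [Fintype V] (W : V ⊕ Unit → ℝ) (u : V) : ℝ :=
  Finset.univ.sup' ⟨u, Finset.mem_univ u⟩ (fun v : V => |W (Sum.inl v)|)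

/-- `b_M`: the maximal value of the bid `(W(v⁺) − W(v⁻))/2` over `V`. -/
noncomputable def bMax {V : Type} [Fintype V] (G : BiddingGame V) (u : V)
    (W : V ⊕ Unit → ℝ) : ℝ :=
  Finset.univ.sup' ⟨u, Finset.mem_univ u⟩
    (fun v : V => (supWu G u W v - infWu G u W v) / 2)


/-!
On a bottom strongly connected component the ergodic equation
`(W(x⁺) + W(x⁻)) / 2 + w x = W x + ℓ` has a solution `W` with a constant `ℓ`, obtained from
discounted games as the discount vanishes. Moving to minimisers of `W` and bidding according to
`(W(x⁺) - W(x⁻)) / 2`, Min brings the energy below a constant infinitely often if `ℓ ≤ 0`; playing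
likewise with `-W`, Max makes the energy grow linearly if `ℓ > 0`. Since the bids are proportional
to the budget, any positive budget suffices for either player.

It remains to decide which components are reached. Let `R` be the Richman function with boundary
values `0` where `ℓ ≤ 0` and `1` where `ℓ > 0`. A budget above `R v` allows Min to force the token
into a component with `ℓ ≤ 0`, and a budget above `1 - R v` allows Max to force it into one with
`ℓ > 0`. So a budget with which Min wins is at least `R v`, and with any larger budget the strategy
above, which only looks at the vertex, the budget and the energy, is available to him.
-/

/-! ### Order and rank -/

lemma exists_map_eq_of_monotone {α : Type*} [ConditionallyCompleteLattice α] {F : α → α}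
    (hF : Monotone F) {a b : α} (hab : a ≤ b) (ha : a ≤ F a) (hb : F b ≤ b) :
    ∃ f ∈ Set.Icc a b, F f = f := by
  have : Fact (a ≤ b) := ⟨hab⟩
  let F' : Set.Icc a b →o Set.Icc a b :=
    ⟨fun f => ⟨F f, ha.trans (hF f.2.1), (hF f.2.2).trans hb⟩, fun _ _ h => hF h⟩
  exact ⟨F'.lfp, F'.lfp.2, congrArg Subtype.val F'.map_lfp⟩

lemma exists_gt_forall_le {ι α : Type*} [Finite ι] [LinearOrder α] [NoMaxOrder α] {a : α}
    {f : ι → α} (h : ∀ i, a < f i) : ∃ b > a, ∀ i, b ≤ f i := by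
  rcases isEmpty_or_nonempty ι with hι | hι
  · obtain ⟨b, hb⟩ := exists_gt a
    exact ⟨b, hb, hι.elim⟩
  · obtain ⟨i, hi⟩ := Finite.exists_min f
    exact ⟨f i, h i, hi⟩

lemma exists_rank_of_forall_reflTransGen {α : Type*} {r : α → α → Prop} {T : Set α}
    (h : ∀ x, ∃ y ∈ T, Relation.ReflTransGen r x y) :
    ∃ d : α → ℕ, ∀ x ∉ T, ∃ y, r x y ∧ d y < d x := by
  let level (n : ℕ) : Set α := (fun S => {x | ∃ y ∈ S, r x y})^[n] T
  have level_succ (n : ℕ) : level (n + 1) = {x | ∃ y ∈ level n, r x y} :=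
    Function.iterate_succ_apply' _ _ _
  have exists_level (x : α) : ∃ n, x ∈ level n := by
    obtain ⟨y, hy, hxy⟩ := h x
    induction hxy using Relation.ReflTransGen.head_induction_on with
    | refl => exact ⟨0, hy⟩
    | head hab _ ih =>
      obtain ⟨n, hn⟩ := ih
      exact ⟨n + 1, level_succ n ▸ ⟨_, hn, hab⟩⟩
  let d (x : α) : ℕ := sInf {n | x ∈ level n}
  have mem_level (x : α) : x ∈ level (d x) := Nat.sInf_mem (exists_level x)
  refine ⟨d, fun x hx => ?_⟩
  have hd : d x ≠ 0 := fun h => hx (h ▸ mem_level x :)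
  obtain ⟨n, hn : d x = n + 1⟩ := Nat.exists_eq_succ_of_ne_zero hd
  obtain ⟨y, hy, hxy⟩ : x ∈ {x | ∃ y ∈ level n, r x y} := by
    rw [← level_succ, ← hn]
    exact mem_level x
  exact ⟨y, hxy, hn ▸ Nat.lt_succ_of_le (Nat.sInf_le hy)⟩

/-! ### The midrange operator -/

namespace BiddingGame

section Midrange

variable {V : Type} [Fintype V] (G : BiddingGame V)

/-- The greatest value of `f` over the successors of `x`, written `f(x⁺)` for Richman functions. -/
noncomputable def supAdj (f : V → ℝ) (x : V) : ℝ := (G.adj x).sup' (G.adj_nonempty x) f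

/-- The least value of `f` over the successors of `x`, written `f(x⁻)` for Richman functions. -/
noncomputable def infAdj (f : V → ℝ) (x : V) : ℝ := (G.adj x).inf' (G.adj_nonempty x) f

/-- The averaging operator whose fixed points are the Richman functions. -/
noncomputable def midrange (f : V → ℝ) (x : V) : ℝ := (G.supAdj f x + G.infAdj f x) / 2

/-- The bid that the potential `f` suggests at `x`: what a player who wants `f` to be small may
pay for moving the token himself. -/
noncomputable def halfRange (f : V → ℝ) (x : V) : ℝ := (G.supAdj f x - G.infAdj f x) / 2

variable {G} {f g : V → ℝ} {x y : V} {c : ℝ}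

lemma mem_adj : y ∈ G.adj x ↔ G.E x y := by simp [adj]

lemma le_supAdj (h : G.E x y) : f y ≤ G.supAdj f x := Finset.le_sup' f (mem_adj.2 h)

lemma infAdj_le (h : G.E x y) : G.infAdj f x ≤ f y := Finset.inf'_le f (mem_adj.2 h)

lemma supAdj_le (h : ∀ y, G.E x y → f y ≤ c) : G.supAdj f x ≤ c :=
  Finset.sup'_le _ _ fun y hy => h y (mem_adj.1 hy)

lemma le_infAdj (h : ∀ y, G.E x y → c ≤ f y) : c ≤ G.infAdj f x :=
  Finset.le_inf' _ _ fun y hy => h y (mem_adj.1 hy)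

lemma exists_apply_eq_infAdj (G : BiddingGame V) (f : V → ℝ) (x : V) :
    ∃ y, G.E x y ∧ f y = G.infAdj f x := by
  obtain ⟨y, hy, h⟩ := Finset.exists_mem_eq_inf' (G.adj_nonempty x) f
  exact ⟨y, mem_adj.1 hy, h.symm⟩

variable (G) in
/-- A successor of `x` minimising `f`: the move of a player who wants `f` to be small. -/
noncomputable def argmin (f : V → ℝ) (x : V) : V := (G.exists_apply_eq_infAdj f x).choose

lemma E_argmin : G.E x (G.argmin f x) := (G.exists_apply_eq_infAdj f x).choose_spec.1

lemma apply_argmin : f (G.argmin f x) = G.infAdj f x :=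
  (G.exists_apply_eq_infAdj f x).choose_spec.2

lemma infAdj_le_supAdj : G.infAdj f x ≤ G.supAdj f x :=
  apply_argmin.ge.trans (le_supAdj E_argmin)

lemma halfRange_nonneg : 0 ≤ G.halfRange f x :=
  div_nonneg (sub_nonneg.2 infAdj_le_supAdj) zero_le_two

lemma infAdj_eq : G.infAdj f x = G.midrange f x - G.halfRange f x := by
  unfold midrange halfRange; ring

lemma supAdj_eq : G.supAdj f x = G.midrange f x + G.halfRange f x := by
  unfold midrange halfRange; ring

lemma midrange_mono (h : ∀ y, G.E x y → f y ≤ g y) : G.midrange f x ≤ G.midrange g x := by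
  have hsup : G.supAdj f x ≤ G.supAdj g x := supAdj_le fun y hy => (h y hy).trans (le_supAdj hy)
  have hinf : G.infAdj f x ≤ G.infAdj g x := le_infAdj fun y hy => (infAdj_le hy).trans (h y hy)
  unfold midrange; gcongr

lemma midrange_congr (h : ∀ y, G.E x y → f y = g y) : G.midrange f x = G.midrange g x :=
  (midrange_mono fun y hy => (h y hy).le).antisymm (midrange_mono fun y hy => (h y hy).ge)

lemma midrange_le (h : ∀ y, G.E x y → f y ≤ c) : G.midrange f x ≤ c := by
  have := supAdj_le h
  have := infAdj_le_supAdj (G := G) (f := f) (x := x)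
  unfold midrange; linarith

lemma le_midrange (h : ∀ y, G.E x y → c ≤ f y) : c ≤ G.midrange f x := by
  have := le_infAdj h
  have := infAdj_le_supAdj (G := G) (f := f) (x := x)
  unfold midrange; linarith

lemma midrange_const_sub (f : V → ℝ) (c : ℝ) (x : V) :
    G.midrange (fun y => c - f y) x = c - G.midrange f x := by
  have hsup : G.supAdj (fun y => c - f y) x = c - G.infAdj f x :=
    (supAdj_le fun y hy => sub_le_sub_left (infAdj_le hy) c).antisymm
      (sub_le_comm.1 (le_infAdj fun y hy => sub_le_comm.1 (le_supAdj (f := fun y => c - f y) hy)))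
  have hinf : G.infAdj (fun y => c - f y) x = c - G.supAdj f x :=
    (le_sub_comm.1 (supAdj_le fun y hy =>
      le_sub_comm.1 (infAdj_le (f := fun y => c - f y) hy))).antisymm
      (le_infAdj fun y hy => sub_le_sub_left (le_supAdj hy) c)
  unfold midrange; rw [hsup, hinf]; ring

lemma midrange_sub_const (f : V → ℝ) (c : ℝ) (x : V) :
    G.midrange (fun y => f y - c) x = G.midrange f x - c := by
  simpa using midrange_const_sub (G := G) (fun y => c - f y) 0 x |>.trans
    (congrArg (0 - ·) (midrange_const_sub f c x))

lemma continuous_midrange (G : BiddingGame V) (x : V) : Continuous fun f => G.midrange f x :=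
  ((Continuous.finset_sup'_apply (G.adj_nonempty x) fun y _ => continuous_apply y).add
    (Continuous.finset_inf'_apply (G.adj_nonempty x) fun y _ => continuous_apply y)).div_const 2

end Midrange

/-! ### Bottom components -/

section Components

variable {V : Type} [Fintype V] (G : BiddingGame V)

/-- The vertices reachable from `x`. -/
def cone (x : V) : Set V := {y | Relation.ReflTransGen G.E x y}

/-- The union of the bottom strongly connected components: the vertices whose cone is also the
cone of each of its elements. -/
def recurrent : Set V := {x | ∀ y ∈ G.cone x, G.cone y = G.cone x}

variable {G} {x y : V}

lemma self_mem_cone : x ∈ G.cone x := .refl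

lemma mem_cone_of_E {z : V} (hy : y ∈ G.cone x) (hyz : G.E y z) : z ∈ G.cone x := hy.tail hyz

lemma cone_subset (hy : y ∈ G.cone x) : G.cone y ⊆ G.cone x := fun _ => hy.trans

lemma cone_eq_of_E (hx : x ∈ G.recurrent) (hxy : G.E x y) : G.cone y = G.cone x :=
  hx y (.single hxy)

lemma mem_recurrent_of_E (hx : x ∈ G.recurrent) (hxy : G.E x y) : y ∈ G.recurrent := by
  intro z hz
  rw [cone_eq_of_E hx hxy] at hz ⊢
  exact hx z hz

lemma exists_mem_cone_recurrent (x : V) : ∃ y ∈ G.recurrent, y ∈ G.cone x := by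
  obtain ⟨y, hy, hmin⟩ := Set.exists_min_image (G.cone x) (fun y => (G.cone y).ncard)
    (Set.toFinite _) ⟨x, self_mem_cone⟩
  exact ⟨y, fun z hz => Set.eq_of_subset_of_ncard_le (cone_subset hz) (hmin z (hy.trans hz)), hy⟩

end Components

/-! ### Harmonic extensions -/

section Dirichlet

variable {V : Type} [Fintype V] {G : BiddingGame V} {T : Set V} {R : V → ℝ}

lemma exists_dirichlet_solution (G : BiddingGame V) (T : Set V) {φ : V → ℝ} {a b : ℝ}
    (hab : a ≤ b) (hφ : ∀ x ∈ T, φ x ∈ Set.Icc a b) :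
    ∃ R : V → ℝ, (∀ x, R x ∈ Set.Icc a b) ∧ (∀ x ∈ T, R x = φ x) ∧
      ∀ x ∉ T, G.midrange R x = R x := by
  let F (f : V → ℝ) (x : V) : ℝ := if x ∈ T then φ x else G.midrange f x
  have hF : Monotone F := fun f g hfg x => by
    by_cases hx : x ∈ T
    · simp only [F, if_pos hx, le_rfl]
    · simpa only [F, if_neg hx] using midrange_mono fun y _ => hfg y
  have ha : (fun _ => a) ≤ F fun _ => a := fun x => by
    by_cases hx : x ∈ T
    · simpa only [F, if_pos hx] using (hφ x hx).1
    · simpa only [F, if_neg hx] using le_midrange fun _ _ => le_rfl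
  have hb : F (fun _ => b) ≤ fun _ => b := fun x => by
    by_cases hx : x ∈ T
    · simpa only [F, if_pos hx] using (hφ x hx).2
    · simpa only [F, if_neg hx] using midrange_le fun _ _ => le_rfl
  obtain ⟨R, hR, hfix⟩ := exists_map_eq_of_monotone hF (fun _ => hab) ha hb
  refine ⟨R, fun x => ⟨hR.1 x, hR.2 x⟩, fun x hx => ?_, fun x hx => ?_⟩
  · rw [← congrFun hfix x]; exact if_pos hx
  · conv_rhs => rw [← congrFun hfix x]
    exact (if_neg hx).symm

lemma exists_mem_reflTransGen_minimizers (hT : ∀ x, ∃ y ∈ T, y ∈ G.cone x)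
    (hR : ∀ x ∉ T, G.midrange R x ≤ R x) (x : V) :
    ∃ y ∈ T, Relation.ReflTransGen (fun x y => G.E x y ∧ R y = G.infAdj R x) x y := by
  by_contra! hx
  set r : V → V → Prop := fun x y => G.E x y ∧ R y = G.infAdj R x
  let D : Set V := {x | ∀ y ∈ T, ¬ Relation.ReflTransGen r x y}
  have mem_of_r {y z : V} (hy : y ∈ D) (hyz : r y z) : z ∈ D := fun t ht hzt =>
    hy t ht (hzt.head hyz)
  obtain ⟨m, hmD, hm⟩ := Set.exists_min_image D R (Set.toFinite _) ⟨x, hx⟩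
  -- Where `R` attains its minimum over `D` it is constant on the successors, so all edges from
  -- there follow `r`, and the cone of `m` stays within `D`.
  have cone_m {y : V} (hy : y ∈ G.cone m) : y ∈ D ∧ R y = R m := by
    induction hy with
    | refl => exact ⟨hmD, rfl⟩
    | @tail y z _ hyz ih =>
      obtain ⟨hyD, hyR⟩ := ih
      have hyT : y ∉ T := fun h => hyD y h .refl
      have hinf : R m ≤ G.infAdj R y :=
        (hm _ (mem_of_r hyD ⟨E_argmin, apply_argmin⟩)).trans_eq apply_argmin
      have hsup : G.supAdj R y ≤ R m := by
        have := hR y hyT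
        unfold midrange at this
        linarith
      have hz : R z = G.infAdj R y :=
        ((le_supAdj hyz).trans (hsup.trans hinf)).antisymm (infAdj_le hyz)
      exact ⟨mem_of_r hyD ⟨hyz, hz⟩,
        ((le_supAdj hyz).trans hsup).antisymm (hinf.trans (infAdj_le hyz))⟩
  obtain ⟨y, hyT, hy⟩ := hT m
  exact (cone_m hy).1 y hyT .refl

lemma exists_strict_supersolution (hT : ∀ x, ∃ y ∈ T, y ∈ G.cone x)
    (hR : ∀ x ∉ T, G.midrange R x ≤ R x) {ε : ℝ} (hε : 0 < ε) :
    ∃ g : V → ℝ, ∃ μ > 0, (∀ x, R x ≤ g x ∧ g x ≤ R x + ε) ∧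
      ∀ x ∉ T, G.midrange g x + μ ≤ g x := by
  obtain ⟨d, hd⟩ := exists_rank_of_forall_reflTransGen
    (exists_mem_reflTransGen_minimizers hT hR)
  -- Along an edge to a minimiser that lowers the rank, the decrease `ε * p` of the potential
  -- triples, which outweighs its loss of at most `ε` at the other successors.
  let p (x : V) : ℝ := (1 / 3) ^ d x
  have hp0 (x : V) : 0 < p x := by positivity
  have hp1 (x : V) : p x ≤ 1 := pow_le_one₀ (by norm_num) (by norm_num)
  obtain ⟨μ, hμ, hμp⟩ := exists_gt_forall_le hp0
  refine ⟨fun x => R x + ε * (1 - p x), ε * μ / 2, by positivity, fun x => ⟨?_, ?_⟩, fun x hx => ?_⟩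
  · exact le_add_of_nonneg_right (mul_nonneg hε.le (sub_nonneg.2 (hp1 x)))
  · nlinarith [hp0 x]
  obtain ⟨y, ⟨hxy, hy⟩, hdy⟩ := hd x hx
  have hpy : 3 * p x ≤ p y := by
    have : p x ≤ (1 / 3) ^ (d y + 1) := pow_le_pow_of_le_one (by norm_num) (by norm_num) hdy
    rw [pow_succ] at this
    linarith
  have hsup : G.supAdj (fun x => R x + ε * (1 - p x)) x ≤ G.supAdj R x + ε :=
    supAdj_le fun z hz => by nlinarith [hp0 z, le_supAdj (f := R) hz]
  have hinf := infAdj_le (f := fun x => R x + ε * (1 - p x)) hxy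
  have hRx := hR x hx
  unfold midrange at hRx ⊢
  nlinarith [hμp x, mul_le_mul_of_nonneg_left hpy hε.le, mul_le_mul_of_nonneg_left (hμp x) hε.le]

end Dirichlet

/-! ### The ergodic equation -/

section Ergodic

variable {V : Type} [Fintype V] {G : BiddingGame V}

lemma exists_discounted_solution (G : BiddingGame V) {w : V → ℝ} {M μ : ℝ} (hM : 0 ≤ M)
    (hw : ∀ x, |w x| ≤ M) (hμ : 0 < μ) (hμ1 : μ ≤ 1) :
    ∃ U : V → ℝ, (∀ x, U x = w x + (1 - μ) * G.midrange U x) ∧ ∀ x, |U x| ≤ M / μ := by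
  have hMμ : M + (1 - μ) * (M / μ) = M / μ := by field_simp; ring
  have h0 : 0 ≤ M / μ := div_nonneg hM hμ.le
  have hμ0 : 0 ≤ 1 - μ := sub_nonneg.2 hμ1
  let F (f : V → ℝ) (x : V) : ℝ := w x + (1 - μ) * G.midrange f x
  have hF : Monotone F := fun f g hfg x => by
    have := midrange_mono (G := G) (x := x) fun y _ => hfg y
    simp only [F]; gcongr
  have hlower : (fun _ => -(M / μ)) ≤ F fun _ => -(M / μ) := fun x => by
    have := mul_le_mul_of_nonneg_left
      (le_midrange (G := G) (x := x) (f := fun _ => -(M / μ)) fun _ _ => le_rfl) hμ0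
    have := neg_le_of_abs_le (hw x)
    simp only [F]; linarith
  have hupper : F (fun _ => M / μ) ≤ fun _ => M / μ := fun x => by
    have := mul_le_mul_of_nonneg_left
      (midrange_le (G := G) (x := x) (f := fun _ => M / μ) fun _ _ => le_rfl) hμ0
    have := le_of_abs_le (hw x)
    simp only [F]; linarith
  obtain ⟨U, hU, hfix⟩ := exists_map_eq_of_monotone hF
    (fun _ => (neg_nonpos.2 h0).trans h0) hlower hupper
  exact ⟨U, fun x => (congrFun hfix x).symm, fun x => abs_le.2 ⟨hU.1 x, hU.2 x⟩⟩

lemma exists_bound_apply_of_mem_cone {y z : V} (hy : y ∈ G.cone z) (L : ℝ) :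
    ∃ S : ℝ, ∀ f : V → ℝ, (∀ x ∈ G.cone z, 0 ≤ f x) →
      (∀ x ∈ G.cone z, G.midrange f x ≤ f x + L) → f z = 0 → f y ≤ S := by
  induction hy with
  | refl => exact ⟨0, fun f _ _ hfz => hfz.le⟩
  | @tail b c hzb hbc ih =>
    obtain ⟨S, hS⟩ := ih
    refine ⟨2 * S + 2 * L, fun f hf hmid hfz => ?_⟩
    have hb := hS f hf hmid hfz
    have hmidb := hmid b hzb
    have hinf : 0 ≤ G.infAdj f b := le_infAdj fun y hy => hf y (mem_cone_of_E hzb hy)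
    have hc := le_supAdj (f := f) hbc
    unfold midrange at hmidb
    linarith

lemma exists_bound_on_cone (G : BiddingGame V) (L : ℝ) :
    ∃ S : ℝ, ∀ z, ∀ f : V → ℝ, (∀ x ∈ G.cone z, 0 ≤ f x) →
      (∀ x ∈ G.cone z, G.midrange f x ≤ f x + L) → f z = 0 → ∀ y ∈ G.cone z, f y ≤ S := by
  choose! S hS using fun z y (hy : y ∈ G.cone z) => exists_bound_apply_of_mem_cone hy L
  obtain ⟨M, hM⟩ := Finite.exists_le fun q : V × V => S q.1 q.2
  exact ⟨M, fun z f hf hmid hfz y hy => (hS z y hy f hf hmid hfz).trans (hM (z, y))⟩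

lemma exists_approx_ergodic_solution (w : V → ℝ) {x₀ : V} (hx₀ : x₀ ∈ G.recurrent) :
    ∃ S M : ℝ, ∀ μ, 0 < μ → μ ≤ 1 →
      ∃ f ∈ Set.Icc (0 : V → ℝ) fun _ => S, ∃ ℓ ∈ Set.Icc (-M) M,
        ∀ x ∈ G.cone x₀, w x + (1 - μ) * G.midrange f x = f x + ℓ := by
  obtain ⟨M, hM⟩ := Finite.exists_le fun x => |w x|
  have hM0 : 0 ≤ M := (abs_nonneg _).trans (hM x₀)
  obtain ⟨S, hS⟩ := exists_bound_on_cone G (2 * M)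
  refine ⟨S, M, fun μ hμ hμ1 => ?_⟩
  obtain ⟨U, hU, hUM⟩ := exists_discounted_solution G hM0 hM hμ hμ1
  obtain ⟨z, hz, hmin⟩ := Set.exists_min_image (G.cone x₀) U (Set.toFinite _) ⟨x₀, self_mem_cone⟩
  have hμU (c : ℝ) (hc : |c| ≤ M / μ) : |μ * c| ≤ M := by
    rwa [abs_mul, abs_of_pos hμ, ← le_div_iff₀' hμ]
  have hmidU (x : V) : |G.midrange U x| ≤ M / μ := abs_le.2
    ⟨le_midrange fun y _ => (abs_le.1 (hUM y)).1, midrange_le fun y _ => (abs_le.1 (hUM y)).2⟩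
  have hUS : ∀ x ∈ G.cone x₀, U x - U z ≤ S := by
    rw [← hx₀ z hz] at hmin ⊢
    refine hS z (fun y => U y - U z) (fun x hx => sub_nonneg.2 (hmin x hx)) (fun x _ => ?_)
      (sub_self _)
    rw [midrange_sub_const]
    linarith [hU x, neg_le_of_abs_le (hM x), le_of_abs_le (hμU _ (hmidU x))]
  have hS0 : 0 ≤ S := by simpa using hUS z hz
  refine ⟨(G.cone x₀).indicator fun y => U y - U z,
    ⟨Set.indicator_nonneg fun x hx => sub_nonneg.2 (hmin x hx), Set.indicator_le' hUS
      fun _ _ => hS0⟩, μ * U z, abs_le.1 (hμU _ (hUM z)), fun x hx => ?_⟩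
  rw [midrange_congr fun y hy => Set.indicator_of_mem (mem_cone_of_E hx hy) _,
    Set.indicator_of_mem hx, midrange_sub_const]
  linarith [hU x]

lemma exists_ergodic_solution_on_cone (w : V → ℝ) {x₀ : V} (hx₀ : x₀ ∈ G.recurrent) :
    ∃ W : V → ℝ, ∃ ℓ : ℝ, ∀ x ∈ G.cone x₀, G.midrange W x + w x = W x + ℓ := by
  obtain ⟨S, M, happrox⟩ := exists_approx_ergodic_solution w hx₀
  choose f hf ℓ hℓ hfℓ using fun n : ℕ => happrox (1 / ((n : ℝ) + 1)) (by positivity)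
    (div_le_one_of_le₀ (le_add_of_nonneg_left n.cast_nonneg) (by positivity))
  obtain ⟨⟨W, ℓ'⟩, -, φ, hφ, hlim⟩ := (isCompact_Icc.prod isCompact_Icc).tendsto_subseq
    (x := fun n => (f n, ℓ n)) fun n => ⟨hf n, hℓ n⟩
  rw [Prod.tendsto_iff] at hlim
  have hμ := (tendsto_one_div_add_atTop_nhds_zero_nat (𝕜 := ℝ)).comp hφ.tendsto_atTop
  refine ⟨W, ℓ', fun x hx => ?_⟩
  have hleft := ((hμ.const_sub 1).mul
    (((continuous_midrange G x).tendsto W).comp hlim.1)).const_add (w x)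
  have hright := ((tendsto_pi_nhds.1 hlim.1) x).add hlim.2
  have := tendsto_nhds_unique (hleft.congr fun n => hfℓ (φ n) x hx) hright
  rw [← this]
  ring

lemma exists_ergodic_solution (G : BiddingGame V) (w : V → ℝ) :
    ∃ W ℓ : V → ℝ, ∀ x ∈ G.recurrent,
      G.midrange W x + w x = W x + ℓ x ∧ ∀ y, G.E x y → ℓ y = ℓ x := by
  have honcone : ∀ C ∈ G.cone '' G.recurrent, ∃ W : V → ℝ, ∃ ℓ : ℝ,
      ∀ x ∈ C, G.midrange W x + w x = W x + ℓ := by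
    rintro _ ⟨x₀, hx₀, rfl⟩
    exact exists_ergodic_solution_on_cone w hx₀
  choose! W ℓ hW using honcone
  refine ⟨fun y => W (G.cone y) y, fun y => ℓ (G.cone y), fun x hx => ⟨?_, fun y hy => ?_⟩⟩
  · rw [midrange_congr fun y hy => by rw [cone_eq_of_E hx hy]]
    exact hW _ ⟨x, hx, rfl⟩ x self_mem_cone
  · simp only [cone_eq_of_E hx hy]

end Ergodic

end BiddingGame

/-! ### Budget against potential -/

/-- One round of bidding seen by a player who wants the level `k` to be small: he bids `a` out of
his budget `b`, and the level falls by at least `β` if he wins and rises by at most `β` if he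
loses. -/
def IsBiddingRound (β a b b' k k' : ℝ) : Prop :=
  k' ≤ k - β ∧ b - a ≤ b' ∨ k' ≤ k + β ∧ b + a ≤ b'

namespace IsBiddingRound

variable {β a b b' k k' : ℝ}

lemma lt_of_min (h : IsBiddingRound β (min b β) b b' k k') (hβ : β ≤ k) (hk : k < b) : k' < b' := by
  rw [min_eq_right (hβ.trans hk.le)] at h
  rcases h with ⟨hk', hb'⟩ | ⟨hk', hb'⟩ <;> linarith

lemma budget_pos {ρ : ℝ} (h : IsBiddingRound β (b * ρ) b b' k k') (hρ : 0 ≤ ρ) (hρ1 : ρ < 1)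
    (hb : 0 < b) : 0 < b' := by
  rcases h with ⟨-, hb'⟩ | ⟨-, hb'⟩ <;> nlinarith

lemma div_le_div (h : IsBiddingRound β (b * (β / k)) b b' k k') (hb : 0 ≤ b) (hk : 0 < k)
    (hk' : 0 < k') : b / k ≤ b' / k' := by
  have hβ : b * (β / k) * k = b * β := by rw [mul_assoc, div_mul_cancel₀ _ hk.ne']
  rw [div_le_div_iff₀ hk hk']
  rcases h with ⟨hlevel, hbudget⟩ | ⟨hlevel, hbudget⟩
  · calc b * k' ≤ b * (k - β) := by gcongr
      _ = (b - b * (β / k)) * k := by rw [sub_mul, hβ]; ring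
      _ ≤ b' * k := by gcongr
  · calc b * k' ≤ b * (k + β) := by gcongr
      _ = (b + b * (β / k)) * k := by rw [add_mul, hβ]; ring
      _ ≤ b' * k := by gcongr

end IsBiddingRound

lemma mul_one_sub_exp_neg_mem_Icc {b s : ℝ} (hb : 0 ≤ b) (hs : 0 ≤ s) :
    b * (1 - Real.exp (-s)) ∈ Set.Icc 0 b :=
  ⟨mul_nonneg hb (sub_nonneg.2 (Real.exp_le_one_iff.2 (neg_nonpos.2 hs))),
    mul_le_of_le_one_right hb (sub_le_self _ (Real.exp_pos _).le)⟩

lemma exp_add_exp_neg_le_two {β δ η : ℝ} (hη : 0 ≤ η) (hδ : η * β ^ 2 / 2 ≤ δ) :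
    Real.exp (η * (β - δ)) + Real.exp (-(η * (β + δ))) ≤ 2 := by
  calc Real.exp (η * (β - δ)) + Real.exp (-(η * (β + δ)))
      = 2 * (Real.exp (-(η * δ)) * Real.cosh (η * β)) := by
        rw [Real.cosh_eq, show η * (β - δ) = -(η * δ) + η * β by ring,
          show -(η * (β + δ)) = -(η * δ) + -(η * β) by ring, Real.exp_add, Real.exp_add]
        ring
    _ ≤ 2 * (Real.exp (-(η * δ)) * Real.exp ((η * β) ^ 2 / 2)) := by
        gcongr; exact Real.cosh_le_exp_half_sq _
    _ = 2 * Real.exp (η * (η * β ^ 2 / 2 - δ)) := by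
        rw [← Real.exp_add]; ring_nf
    _ ≤ 2 * 1 := by
        gcongr
        exact Real.exp_le_one_iff.2 (mul_nonpos_of_nonneg_of_nonpos hη (sub_nonpos.2 hδ))
    _ = 2 := mul_one 2

lemma IsBiddingRound.mul_exp_le_mul_exp {β b b' k k' δ η : ℝ}
    (h : IsBiddingRound β (b * (1 - Real.exp (-(η * (β + δ))))) b b' k (k' + δ))
    (hb : 0 ≤ b) (hη : 0 ≤ η) (hδ : η * β ^ 2 / 2 ≤ δ) :
    b * Real.exp (-(η * k)) ≤ b' * Real.exp (-(η * k')) := by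
  suffices key : ∃ s, b * Real.exp (η * s) ≤ b' ∧ k' ≤ k + s by
    obtain ⟨s, hbudget, hlevel⟩ := key
    calc b * Real.exp (-(η * k)) = b * Real.exp (η * s) * Real.exp (-(η * (k + s))) := by
          rw [mul_assoc, ← Real.exp_add]; ring_nf
      _ ≤ b' * Real.exp (-(η * k')) := by
          have : 0 ≤ b' := hbudget.trans' (by positivity)
          gcongr
  rcases h with ⟨hlevel, hbudget⟩ | ⟨hlevel, hbudget⟩
  · exact ⟨-(β + δ), by rw [mul_neg]; linarith, by linarith⟩
  · exact ⟨β - δ, by nlinarith [exp_add_exp_neg_le_two hη hδ], by linarith⟩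

section Sequences

variable {β b k : ℕ → ℝ} {N : ℕ}

lemma exists_frequently_le_of_isBiddingRound {K : ℝ} (hβ : ∀ n, 0 ≤ β n) (hK : ∀ n, β n < K)
    (hround : ∀ n ≥ N, IsBiddingRound (β n) (b n * if K ≤ k n then β n / k n else 0)
      (b n) (b (n + 1)) (k n) (k (n + 1)))
    (hbN : 0 < b N) (hb1 : ∀ n ≥ N, b n ≤ 1) : ∃ c, ∃ᶠ n in Filter.atTop, k n ≤ c := by
  by_cases hfreq : ∃ᶠ n in Filter.atTop, k n ≤ K
  · exact ⟨K, hfreq⟩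
  have hK0 : 0 < K := (hβ 0).trans_lt (hK 0)
  have hb (n : ℕ) (hn : N ≤ n) : 0 < b n := by
    induction n, hn using Nat.le_induction with
    | base => exact hbN
    | succ n hn ih =>
      refine (hround n hn).budget_pos ?_ ?_ ih <;> split_ifs with h
      · exact div_nonneg (hβ n) (hK0.le.trans h)
      · exact le_rfl
      · exact (div_lt_one (hK0.trans_le h)).2 ((hK n).trans_le h)
      · exact one_pos
  obtain ⟨N', hN'⟩ := Filter.eventually_atTop.1 (Filter.not_frequently.1 hfreq)
  let P := max N N'
  have hk (n : ℕ) (hn : P ≤ n) : K < k n := not_le.1 (hN' n (le_of_max_le_right hn))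
  have hmono : MonotoneOn (fun n => b n / k n) (Set.Ici P) :=
    monotoneOn_nat_Ici_of_le_succ fun n hn => by
      have h := hround n (le_of_max_le_left hn)
      rw [if_pos (hk n hn).le] at h
      exact h.div_le_div (hb n (le_of_max_le_left hn)).le (hK0.trans (hk n hn))
        (hK0.trans (hk (n + 1) (hn.trans n.le_succ)))
  refine ⟨(b P / k P)⁻¹, Filter.Eventually.frequently (Filter.eventually_atTop.2
    ⟨P, fun n hn => ?_⟩)⟩
  have hkn := hK0.trans (hk n hn)
  have hratio : b P / k P ≤ 1 / k n := (hmono Set.self_mem_Ici hn hn).trans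
    (div_le_div_of_nonneg_right (hb1 n (le_of_max_le_left hn)) hkn.le)
  rw [one_div] at hratio
  exact le_inv_of_le_inv₀ (div_pos (hb P (le_max_left _ _)) (hK0.trans (hk P le_rfl))) hratio

lemma exists_forall_le_of_isBiddingRound {δ η : ℝ} (hη : 0 < η)
    (hδ : ∀ n, η * β n ^ 2 / 2 ≤ δ)
    (hround : ∀ n ≥ N, IsBiddingRound (β n) (b n * (1 - Real.exp (-(η * (β n + δ)))))
      (b n) (b (n + 1)) (k n) (k (n + 1) + δ))
    (hbN : 0 < b N) (hb : ∀ n ≥ N, b n ∈ Set.Icc 0 1) : ∃ c, ∀ n ≥ N, k n ≤ c := by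
  have hmono : MonotoneOn (fun n => b n * Real.exp (-(η * k n))) (Set.Ici N) :=
    monotoneOn_nat_Ici_of_le_succ fun n hn =>
      (hround n hn).mul_exp_le_mul_exp (hb n hn).1 hη.le (hδ n)
  refine ⟨-Real.log (b N * Real.exp (-(η * k N))) / η, fun n hn => ?_⟩
  have hexp : b N * Real.exp (-(η * k N)) ≤ Real.exp (-(η * k n)) :=
    (hmono Set.self_mem_Ici hn hn).trans
      (mul_le_of_le_one_left (Real.exp_pos _).le (hb n hn).2)
  rw [le_div_iff₀' hη, le_neg]
  exact (Real.log_le_iff_le_exp (by positivity)).2 hexp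

end Sequences

/-! ### Greedy rounds on the graph -/

namespace BiddingGame

variable {V : Type} [Fintype V] {G : BiddingGame V}

/-- A round from `x` to `y` in which a player with budget `b` bids `a` and moves to a minimiser of
the potential `f` upon winning; `b'` is his next budget. -/
structure IsGreedyRound (G : BiddingGame V) (f : V → ℝ) (a : ℝ) (x y : V) (b b' : ℝ) : Prop where
  edge : G.E x y
  won_or_lost : f y = G.infAdj f x ∧ b' = b - a ∨ b + a ≤ b'

lemma IsGreedyRound.isBiddingRound {f : V → ℝ} {a b b' c : ℝ} {x y : V}
    (h : G.IsGreedyRound f a x y b b') (hf : G.midrange f x + c ≤ f x) (e : ℝ) :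
    IsBiddingRound (G.halfRange f x) a b b' (e + f x) (e + c + f y) := by
  rcases h.won_or_lost with ⟨hy, hb'⟩ | hb'
  · rw [infAdj_eq] at hy
    exact .inl ⟨by linarith, hb'.ge⟩
  · have hy := le_supAdj (f := f) h.edge
    rw [supAdj_eq] at hy
    exact .inr ⟨by linarith, hb'⟩

lemma exists_mem_of_isGreedyRound {T : Set V} {g : V → ℝ} {μ : ℝ} {x : ℕ → V} {b : ℕ → ℝ}
    (hμ : 0 < μ) (hg0 : ∀ y, 0 ≤ g y) (hg : ∀ y ∉ T, G.midrange g y + μ ≤ g y)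
    (hround : ∀ n, x n ∉ T →
      G.IsGreedyRound g (min (b n) (G.halfRange g (x n))) (x n) (x (n + 1)) (b n) (b (n + 1)))
    (hb1 : ∀ n, b n ≤ 1) (h0 : g (x 0) < b 0) : ∃ n, x n ∈ T ∧ g (x n) < b n := by
  have hlt (n : ℕ) (hn : ∀ m < n, x m ∉ T) : n * μ + g (x n) < b n := by
    induction n with
    | zero => simpa using h0
    | succ n ih =>
      have hxn := hn n n.lt_succ_self
      have h := (hround n hxn).isBiddingRound (hg _ hxn) (n * μ)
      have hhalf : G.halfRange g (x n) ≤ n * μ + g (x n) := by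
        have hinf : 0 ≤ G.infAdj g (x n) := le_infAdj fun y _ => hg0 y
        rw [infAdj_eq] at hinf
        have hnμ : 0 ≤ n * μ := by positivity
        linarith [hg _ hxn]
      rw [Nat.cast_succ, add_one_mul]
      exact h.lt_of_min hhalf (ih fun m hm => hn m (hm.trans n.lt_succ_self))
  have hvisit : ∃ n, x n ∈ T := by
    by_contra! hT
    obtain ⟨n, hn⟩ := exists_nat_gt μ⁻¹
    have h1 : 1 < n * μ := (inv_lt_iff_one_lt_mul₀ hμ).1 hn
    linarith [hlt n fun m _ => hT m, hg0 (x n), hb1 n]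
  refine ⟨Nat.find hvisit, Nat.find_spec hvisit, ?_⟩
  have := hlt (Nat.find hvisit) fun m hm => Nat.find_min hvisit hm
  have hnμ : 0 ≤ Nat.find hvisit * μ := by positivity
  linarith

end BiddingGame

/-! ### Exchanging the players -/

section Swap

variable {V : Type}

/-- The round with the roles of the players exchanged. -/
def BidRound.swap (r : BidRound V) : BidRound V := ⟨r.dest, r.bid, !r.p1Won⟩

/-- The history with the roles of the players exchanged. -/
def Hist.swap (h : Hist V) : Hist V := ⟨h.init, h.rounds.map BidRound.swap⟩

/-- The strategy `f` used by the opponent, who sees the histories with the roles exchanged. -/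
def Strat.swap (f : Strat V) : Strat V := fun h => f h.swap

/-- The tie-breaking mechanism `tb` after the roles of the players have been exchanged. -/
def TieBreak.swap (tb : TieBreak V) : TieBreak V := fun h => !tb h.swap

namespace Hist

variable (h : Hist V)

@[simp] lemma swap_swap : h.swap.swap = h := by
  simp [swap, BidRound.swap, Function.comp_def]

@[simp] lemma cur_swap : h.swap.cur = h.cur := by
  simp only [cur, swap, List.getLast?_map]
  cases h.rounds.getLast? <;> rfl

@[simp] lemma pay1_swap : h.swap.pay1 = h.pay2 := by
  obtain ⟨v, rounds⟩ := h
  simp only [pay1, pay2, swap]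
  induction rounds with
  | nil => simp
  | cons r rounds ih =>
    rw [List.map_cons, List.map_cons, List.sum_cons, ih, List.map_cons, List.sum_cons, neg_add]
    cases hr : r.p1Won <;> simp [BidRound.swap, hr]

end Hist

@[simp] lemma Strat.swap_swap (f : Strat V) : f.swap.swap = f := by
  funext h; simp [swap]

@[simp] lemma TieBreak.swap_swap (tb : TieBreak V) : tb.swap.swap = tb := by
  funext h; simp [swap]

lemma extend_swap (tb : TieBreak V) (f1 f2 : Strat V) (h : Hist V) :
    extend tb.swap f2.swap f1.swap h.swap = (extend tb f1 f2 h).swap := by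
  simp only [extend, Strat.swap, TieBreak.swap, Hist.swap_swap]
  rcases lt_trichotomy (f1 h).1 (f2 h).1 with hlt | heq | hgt
  · simp [hlt, hlt.ne, hlt.not_gt, Hist.swap, BidRound.swap]
  · cases tb h <;> simp [heq, Hist.swap, BidRound.swap]
  · simp [hgt, hgt.ne, hgt.not_gt, Hist.swap, BidRound.swap]

lemma play_swap (tb : TieBreak V) (f1 f2 : Strat V) (v0 : V) (n : ℕ) :
    play tb.swap f2.swap f1.swap v0 n = (play tb f1 f2 v0 n).swap := by
  induction n with
  | zero => rfl
  | succ n ih => rw [play, ih, extend_swap, play]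

lemma mpval_swap (w : V → ℤ) (tb : TieBreak V) (f1 f2 : Strat V) (v0 : V) :
    mpval w tb.swap f2.swap f1.swap v0 = mpval w tb f1 f2 v0 := by
  simp only [mpval, energy, visit, play_swap, Hist.cur_swap]

lemma Legal1.swap [Fintype V] {G : BiddingGame V} {f : Strat V} {B : ℝ} (hf : Legal1 G f B) :
    Legal2 G f.swap B := fun tb f1 v0 n => by
  have hplay : (play tb f1 f.swap v0 n).swap = play tb.swap f f1.swap v0 n := by
    simp [← play_swap]
  simpa only [Strat.swap, hplay, ← Hist.pay1_swap, ← Hist.cur_swap (play tb f1 f.swap v0 n)] using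
    hf tb.swap f1.swap v0 n

end Swap

/-! ### Plays -/

section Plays

variable {V : Type} {tb : TieBreak V} {f1 f2 : Strat V} {v0 : V} {n : ℕ}

/-- The budget of Player 1 after `n` rounds when his initial budget is `B`. -/
noncomputable def budget (B : ℝ) (tb : TieBreak V) (f1 f2 : Strat V) (v0 : V) (n : ℕ) : ℝ :=
  B - (play tb f1 f2 v0 n).pay1

lemma budget_zero {B : ℝ} : budget B tb f1 f2 v0 0 = B := by
  simp [budget, play, Hist.pay1]

lemma visit_budget_succ_cases (B : ℝ) (tb : TieBreak V) (f1 f2 : Strat V) (v0 : V) (n : ℕ) :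
    visit tb f1 f2 v0 (n + 1) = (f1 (play tb f1 f2 v0 n)).2 ∧
        budget B tb f1 f2 v0 (n + 1) = budget B tb f1 f2 v0 n - (f1 (play tb f1 f2 v0 n)).1 ∨
      visit tb f1 f2 v0 (n + 1) = (f2 (play tb f1 f2 v0 n)).2 ∧
        budget B tb f1 f2 v0 n + (f1 (play tb f1 f2 v0 n)).1 ≤ budget B tb f1 f2 v0 (n + 1) := by
  simp only [visit, budget, play, extend]
  split_ifs with hwin
  · exact .inl ⟨by simp [Hist.cur], by simp [Hist.pay1]; ring⟩
  · push Not at hwin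
    exact .inr ⟨by simp [Hist.cur], by simp [Hist.pay1]; linarith [hwin.1]⟩

lemma energyAll_play (w : V → ℤ) (tb : TieBreak V) (f1 f2 : Strat V) (v0 : V) (n : ℕ) :
    (play tb f1 f2 v0 n).energyAll w = energy w tb f1 f2 v0 (n + 1) := by
  induction n with
  | zero => simp [Hist.energyAll, energy, visit, play, Hist.cur]
  | succ n ih =>
    rw [energy, Finset.sum_range_succ, ← energy, ← ih]
    simp only [visit, play, extend]
    split_ifs <;> simp [Hist.energyAll, Hist.cur, add_assoc]

lemma energy_succ (w : V → ℤ) (tb : TieBreak V) (f1 f2 : Strat V) (v0 : V) (n : ℕ) :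
    energy w tb f1 f2 v0 (n + 1) = energy w tb f1 f2 v0 n + w (visit tb f1 f2 v0 n) :=
  Finset.sum_range_succ _ _

variable [Fintype V] {G : BiddingGame V} {B : ℝ}

lemma Legal1.budget_nonneg (hf1 : Legal1 G f1 B) : 0 ≤ budget B tb f1 f2 v0 n :=
  have h := hf1 tb f2 v0 n
  h.1.trans h.2.1

lemma Legal2.budget_le_one (hf2 : Legal2 G f2 (1 - B)) : budget B tb f1 f2 v0 n ≤ 1 := by
  have h := (hf2 tb f1 v0 n).1.trans (hf2 tb f1 v0 n).2.1
  rw [Hist.pay2] at h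
  unfold budget
  linarith

end Plays

/-! ### Mean-payoff values from energy bounds -/

section MeanPayoff

variable {V : Type} [Finite V] {w : V → ℤ} {tb : TieBreak V} {f1 f2 : Strat V} {v0 : V}

lemma exists_abs_energy_div_le (w : V → ℤ) (tb : TieBreak V) (f1 f2 : Strat V) (v0 : V) :
    ∃ M : ℝ, ∀ n : ℕ, |(energy w tb f1 f2 v0 n : ℝ) / n| ≤ M := by
  obtain ⟨M, hM⟩ := Finite.exists_le fun y => |(w y : ℝ)|
  refine ⟨M, fun n => ?_⟩
  rw [abs_div, Nat.abs_cast]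
  refine div_le_of_le_mul₀ n.cast_nonneg ((abs_nonneg _).trans (hM v0)) ?_
  calc |(energy w tb f1 f2 v0 n : ℝ)|
      ≤ ∑ i ∈ Finset.range n, |(w (visit tb f1 f2 v0 i) : ℝ)| := by
        rw [energy, Int.cast_sum]; exact Finset.abs_sum_le_sum_abs _ _
    _ ≤ ∑ _i ∈ Finset.range n, M := Finset.sum_le_sum fun i _ => hM _
    _ = M * n := by simp [mul_comm]

lemma mpval_nonpos_of_frequently_energy_le {c : ℝ}
    (h : ∃ᶠ n in Filter.atTop, (energy w tb f1 f2 v0 n : ℝ) ≤ c) : mpval w tb f1 f2 v0 ≤ 0 := by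
  obtain ⟨M, hM⟩ := exists_abs_energy_div_le w tb f1 f2 v0
  refine le_of_forall_gt fun ε hε => ?_
  obtain ⟨ε', hε', hε'ε⟩ := exists_between hε
  refine lt_of_le_of_lt (Filter.liminf_le_of_frequently_le ?_
    (Filter.isBoundedUnder_of ⟨-M, fun n => neg_le_of_abs_le (hM n)⟩)) hε'ε
  have hc := (tendsto_const_div_atTop_nhds_zero_nat c).eventually_le_const hε'
  exact (h.and_eventually hc).mono fun n hn =>
    (div_le_div_of_nonneg_right hn.1 n.cast_nonneg).trans hn.2

lemma mpval_pos_of_eventually_le_energy {δ c : ℝ} (hδ : 0 < δ)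
    (h : ∀ᶠ n : ℕ in Filter.atTop, δ * n - c ≤ energy w tb f1 f2 v0 n) :
    0 < mpval w tb f1 f2 v0 := by
  obtain ⟨M, hM⟩ := exists_abs_energy_div_le w tb f1 f2 v0
  refine (half_pos hδ).trans_le (Filter.le_liminf_of_le
    (Filter.isBoundedUnder_of ⟨M, fun n => le_of_abs_le (hM n)⟩).isCoboundedUnder_ge ?_)
  have hc := (tendsto_const_div_atTop_nhds_zero_nat c).eventually_le_const (half_pos hδ)
  filter_upwards [h, hc, Filter.eventually_gt_atTop 0] with n hn hcn hn0
  have hn0' : (0 : ℝ) < n := Nat.cast_pos.2 hn0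
  rw [div_le_iff₀ hn0'] at hcn
  rw [le_div_iff₀ hn0']
  linarith

end MeanPayoff

/-! ### Greedy strategies -/

section Greedy

variable {V : Type} [Fintype V] {G : BiddingGame V} {w : V → ℤ} {B : ℝ} {pot : V → V → ℝ}
  {bid : V → ℝ → ℤ → ℝ}

/-- The strategy of Player 1 with initial budget `B` that at `x` moves to a minimiser of the
potential `pot x` and bids `bid x b e`, where `b` is his budget and `e` the sum of the weights of
the vertices visited before `x` (as in `energy`, and unlike `Hist.energyAll`). -/
noncomputable def greedyStrat (G : BiddingGame V) (w : V → ℤ) (B : ℝ) (pot : V → V → ℝ)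
    (bid : V → ℝ → ℤ → ℝ) : Strat V :=
  fun h => (bid h.cur (B - h.pay1) (h.energyAll w - w h.cur), G.argmin (pot h.cur) h.cur)

lemma memorylessE_greedyStrat : MemorylessE w (greedyStrat G w B pot bid) := by
  intro h h' hcur hpay henergy
  simp only [greedyStrat, hcur, hpay, henergy]

lemma greedyStrat_play (tb : TieBreak V) (f1 f2 : Strat V) (v0 : V) (n : ℕ) :
    greedyStrat G w B pot bid (play tb f1 f2 v0 n) =
      (bid (visit tb f1 f2 v0 n) (budget B tb f1 f2 v0 n) (energy w tb f1 f2 v0 n),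
        G.argmin (pot (visit tb f1 f2 v0 n)) (visit tb f1 f2 v0 n)) := by
  rw [greedyStrat, energyAll_play, energy_succ, visit, add_sub_cancel_right, budget]

lemma legal1_greedyStrat (hB : 0 ≤ B) (hbid : ∀ y b e, 0 ≤ b → bid y b e ∈ Set.Icc 0 b) :
    Legal1 G (greedyStrat G w B pot bid) B := by
  intro tb f2 v0 n
  set f1 := greedyStrat G w B pot bid with hf1
  have hbudget : 0 ≤ budget B tb f1 f2 v0 n := by
    induction n with
    | zero => rwa [budget_zero]
    | succ n ih =>
      have h := hbid (visit tb f1 f2 v0 n) _ (energy w tb f1 f2 v0 n) ih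
      have hcases := visit_budget_succ_cases B tb f1 f2 v0 n
      rw [hf1, greedyStrat_play, ← hf1] at hcases
      rcases hcases with ⟨-, hb⟩ | ⟨-, hb⟩ <;> linarith [h.1, h.2]
  have h := hbid (visit tb f1 f2 v0 n) _ (energy w tb f1 f2 v0 n) hbudget
  rw [hf1, greedyStrat_play, ← hf1]
  exact ⟨h.1, h.2, BiddingGame.E_argmin⟩

lemma isGreedyRound_greedyStrat {tb : TieBreak V} {f1 f2 : Strat V} (v0 : V)
    (hf1 : f1 = greedyStrat G w B pot bid) (hf2 : Legal2 G f2 (1 - B)) (n : ℕ) :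
    G.IsGreedyRound (pot (visit tb f1 f2 v0 n))
      (bid (visit tb f1 f2 v0 n) (budget B tb f1 f2 v0 n) (energy w tb f1 f2 v0 n))
      (visit tb f1 f2 v0 n) (visit tb f1 f2 v0 (n + 1))
      (budget B tb f1 f2 v0 n) (budget B tb f1 f2 v0 (n + 1)) := by
  have hact := greedyStrat_play (G := G) (w := w) (B := B) (pot := pot) (bid := bid) tb f1 f2 v0 n
  rw [← hf1] at hact
  have hcases := visit_budget_succ_cases B tb f1 f2 v0 n
  rw [hact] at hcases
  rcases hcases with ⟨hv, hb⟩ | ⟨hv, hb⟩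
  · rw [hv]
    exact ⟨BiddingGame.E_argmin, .inl ⟨BiddingGame.apply_argmin, hb⟩⟩
  · exact ⟨hv ▸ (hf2 tb f1 v0 n).2.2, .inr hb⟩

end Greedy

/-! ### Optimal strategies -/

namespace BiddingGame

variable {V : Type} [Fintype V] {G : BiddingGame V} {w : V → ℤ} {S : Set V} {R W : V → ℝ} {v : V}
  {B : ℝ}

/-- A certificate that at `x` every budget above `R x` suffices to force the token into the closed
set `S`. The value `1` marks the vertices from which no budget is claimed to suffice. -/
structure IsReachPotential (G : BiddingGame V) (S : Set V) (R : V → ℝ) : Prop where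
  closed : ∀ x ∈ S, ∀ y, G.E x y → y ∈ S
  nonneg : ∀ x, 0 ≤ R x
  midrange_le : ∀ x ∉ S, R x < 1 → G.midrange R x ≤ R x
  reach : ∀ x, ∃ y, (y ∈ S ∨ 1 ≤ R y) ∧ y ∈ G.cone x

lemma IsReachPotential.exists_strategy (h : G.IsReachPotential S R) (hB : R v < B) (w : V → ℤ)
    (W : V → ℝ) {bid : V → ℝ → ℤ → ℝ} (hbid : ∀ y b e, 0 ≤ b → bid y b e ∈ Set.Icc 0 b) :
    ∃ f1 : Strat V, MemorylessE w f1 ∧ Legal1 G f1 B ∧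
      ∀ (tb : TieBreak V) (f2 : Strat V), Legal2 G f2 (1 - B) →
        ∃ N, 0 < budget B tb f1 f2 v N ∧ ∀ n ≥ N, visit tb f1 f2 v n ∈ S ∧
          G.IsGreedyRound W
            (bid (visit tb f1 f2 v n) (budget B tb f1 f2 v n) (energy w tb f1 f2 v n))
            (visit tb f1 f2 v n) (visit tb f1 f2 v (n + 1))
            (budget B tb f1 f2 v n) (budget B tb f1 f2 v (n + 1)) := by
  obtain ⟨g, μ, hμ, hRg, hg⟩ := exists_strict_supersolution (T := {y | y ∈ S ∨ 1 ≤ R y}) h.reach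
    (fun x hx => h.midrange_le x (mt .inl hx) (not_le.1 (mt .inr hx))) (half_pos (sub_pos.2 hB))
  have hg0 (y : V) : 0 ≤ g y := (h.nonneg y).trans (hRg y).1
  let pot (y : V) : V → ℝ := if y ∈ S then W else g
  let bid' (y : V) (b : ℝ) (e : ℤ) : ℝ := if y ∈ S then bid y b e else min b (G.halfRange g y)
  have hbid' (y : V) (b : ℝ) (e : ℤ) (hb : 0 ≤ b) : bid' y b e ∈ Set.Icc 0 b := by
    by_cases hy : y ∈ S
    · simpa only [bid', if_pos hy] using hbid y b e hb
    · simpa only [bid', if_neg hy] using ⟨le_min hb halfRange_nonneg, min_le_left _ _⟩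
  refine ⟨greedyStrat G w B pot bid', memorylessE_greedyStrat,
    legal1_greedyStrat ((h.nonneg v).trans hB.le) hbid', fun tb f2 hf2 => ?_⟩
  have hround := isGreedyRound_greedyStrat (G := G) (w := w) (pot := pot) (bid := bid') (tb := tb)
    v rfl hf2
  set f1 := greedyStrat G w B pot bid'
  obtain ⟨N, hNT, hgN⟩ := exists_mem_of_isGreedyRound (x := visit tb f1 f2 v)
    (b := budget B tb f1 f2 v) hμ hg0 hg
    (fun n hn => by simpa only [pot, bid', if_neg fun hS => hn (Or.inl hS)] using hround n)
    (fun n => hf2.budget_le_one)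
    (show g v < budget B tb f1 f2 v 0 by rw [budget_zero]; linarith [(hRg v).2])
  have hNS : visit tb f1 f2 v N ∈ S := hNT.resolve_right fun h1 =>
    (h1.trans (hRg _).1).not_gt (hgN.trans_le hf2.budget_le_one)
  have hS (n : ℕ) (hn : N ≤ n) : visit tb f1 f2 v n ∈ S := by
    induction n, hn using Nat.le_induction with
    | base => exact hNS
    | succ n _ ih => exact h.closed _ ih _ (hround n).edge
  exact ⟨N, (hg0 _).trans_lt hgN, fun n hn => ⟨hS n hn, by
    simpa only [pot, bid', if_pos (hS n hn)] using hround n⟩⟩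

theorem IsReachPotential.exists_memorylessE_mpval_nonpos (h : G.IsReachPotential S R)
    (hB : R v < B) (hW : ∀ x ∈ S, G.midrange W x + w x ≤ W x) :
    ∃ f1 : Strat V, MemorylessE w f1 ∧ Legal1 G f1 B ∧
      ∀ (tb : TieBreak V) (f2 : Strat V), Legal2 G f2 (1 - B) → mpval w tb f1 f2 v ≤ 0 := by
  obtain ⟨M, hM⟩ := Finite.exists_le (G.halfRange W)
  obtain ⟨m, hm⟩ := Finite.exists_ge W
  let K := M + 1
  have hK (y : V) : G.halfRange W y < K := (hM y).trans_lt (lt_add_one M)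
  have hK0 : 0 < K := halfRange_nonneg.trans_lt (hK v)
  let bid (y : V) (b : ℝ) (e : ℤ) : ℝ := b * if K ≤ e + W y then G.halfRange W y / (e + W y) else 0
  have hbid (y : V) (b : ℝ) (e : ℤ) (hb : 0 ≤ b) : bid y b e ∈ Set.Icc 0 b := by
    by_cases he : K ≤ e + W y
    · simp only [bid, if_pos he]
      have he0 := hK0.trans_le he
      exact ⟨mul_nonneg hb (div_nonneg halfRange_nonneg he0.le),
        mul_le_of_le_one_right hb ((div_le_one he0).2 ((hK y).le.trans he))⟩
    · simp [bid, if_neg he, hb]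
  obtain ⟨f1, hmem, hf1, hplay⟩ := h.exists_strategy hB w W hbid
  refine ⟨f1, hmem, hf1, fun tb f2 hf2 => ?_⟩
  obtain ⟨N, hbN, hN⟩ := hplay tb f2 hf2
  obtain ⟨c, hc⟩ := exists_frequently_le_of_isBiddingRound
    (β := fun n => G.halfRange W (visit tb f1 f2 v n))
    (k := fun n => energy w tb f1 f2 v n + W (visit tb f1 f2 v n))
    (fun _ => halfRange_nonneg) (fun n => hK _)
    (fun n hn => by
      obtain ⟨hS, hround⟩ := hN n hn
      rw [energy_succ, Int.cast_add]
      exact hround.isBiddingRound (hW _ hS) _)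
    hbN fun n _ => hf2.budget_le_one
  exact mpval_nonpos_of_frequently_energy_le (c := c - m)
    (hc.mono fun n hn => by linarith [hm (visit tb f1 f2 v n)])

lemma exists_pos_midrange_add_le (hW : ∀ x ∈ S, G.midrange W x - w x < W x) :
    ∃ δ > 0, ∀ x ∈ S, G.midrange W x + (2 * δ - w x) ≤ W x := by
  obtain ⟨ε, hε, hWε⟩ := exists_gt_forall_le
    (f := fun x : S => W x - (G.midrange W x - w x)) fun x => sub_pos.2 (hW x x.2)
  exact ⟨ε / 2, half_pos hε, fun x hx => by linarith [hWε ⟨x, hx⟩]⟩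

theorem IsReachPotential.exists_mpval_pos (h : G.IsReachPotential S R) (hB : R v < B)
    (hW : ∀ x ∈ S, G.midrange W x - w x < W x) :
    ∃ f1 : Strat V, Legal1 G f1 B ∧
      ∀ (tb : TieBreak V) (f2 : Strat V), Legal2 G f2 (1 - B) → 0 < mpval w tb f1 f2 v := by
  obtain ⟨δ, hδ, hWδ⟩ := exists_pos_midrange_add_le hW
  obtain ⟨M, hM⟩ := Finite.exists_le fun x => G.halfRange W x ^ 2
  obtain ⟨m, hm⟩ := Finite.exists_ge W
  obtain ⟨η, hη, hηδ⟩ : ∃ η > 0, η * M ≤ 2 * δ := by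
    refine ⟨2 * δ / (|M| + 1), by positivity, ?_⟩
    rw [div_mul_eq_mul_div, div_le_iff₀ (by positivity)]
    gcongr
    linarith [le_abs_self M]
  let bid (y : V) (b : ℝ) (_ : ℤ) : ℝ := b * (1 - Real.exp (-(η * (G.halfRange W y + δ))))
  have hbid (y : V) (b : ℝ) (e : ℤ) (hb : 0 ≤ b) : bid y b e ∈ Set.Icc 0 b :=
    mul_one_sub_exp_neg_mem_Icc hb (mul_nonneg hη.le (add_nonneg halfRange_nonneg hδ.le))
  obtain ⟨f1, -, hf1, hplay⟩ := h.exists_strategy hB w W hbid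
  refine ⟨f1, hf1, fun tb f2 hf2 => ?_⟩
  obtain ⟨N, hbN, hN⟩ := hplay tb f2 hf2
  obtain ⟨c, hc⟩ := exists_forall_le_of_isBiddingRound
    (β := fun n => G.halfRange W (visit tb f1 f2 v n))
    (k := fun n => δ * n - energy w tb f1 f2 v n + W (visit tb f1 f2 v n)) hη
    (fun n => (div_le_iff₀' two_pos).2 ((mul_le_mul_of_nonneg_left (hM _) hη.le).trans hηδ))
    (fun n hn => by
      obtain ⟨hS, hround⟩ := hN n hn
      convert hround.isBiddingRound (hWδ _ hS) (δ * n - energy w tb f1 f2 v n) using 1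
      rw [energy_succ]
      push_cast
      ring)
    hbN fun n _ => ⟨hf1.budget_nonneg, hf2.budget_le_one⟩
  refine mpval_pos_of_eventually_le_energy (c := c - m) hδ
    (Filter.eventually_atTop.2 ⟨N, fun n hn => ?_⟩)
  linarith [hc n hn, hm (visit tb f1 f2 v n)]

lemma isReachPotential_of_midrange_eq {p : V → Prop}
    (hp : ∀ x ∈ G.recurrent, ∀ y, G.E x y → (p y ↔ p x)) (hR0 : ∀ x, 0 ≤ R x)
    (hR1 : ∀ x ∈ G.recurrent, ¬ p x → 1 ≤ R x) (hR : ∀ x ∉ G.recurrent, G.midrange R x = R x) :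
    G.IsReachPotential {x ∈ G.recurrent | p x} R where
  closed x hx y hxy := ⟨mem_recurrent_of_E hx.1 hxy, (hp x hx.1 y hxy).2 hx.2⟩
  nonneg := hR0
  midrange_le x hx hRx :=
    (hR x fun hrec => hx ⟨hrec, by_contra fun hpx => (hR1 x hrec hpx).not_gt hRx⟩).le
  reach x := by
    obtain ⟨y, hrec, hy⟩ := G.exists_mem_cone_recurrent x
    exact ⟨y, (em (p y)).imp (⟨hrec, ·⟩) (hR1 y hrec), hy⟩

lemma exists_complementary_reachPotentials {p : V → Prop}
    (hp : ∀ x ∈ G.recurrent, ∀ y, G.E x y → (p y ↔ p x)) :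
    ∃ R : V → ℝ, G.IsReachPotential {x ∈ G.recurrent | p x} R ∧
      G.IsReachPotential {x ∈ G.recurrent | ¬ p x} fun x => 1 - R x := by
  obtain ⟨R, hR01, hRrec, hR⟩ := G.exists_dirichlet_solution G.recurrent zero_le_one
    (φ := fun x => if p x then 0 else 1) fun x _ => by
      split_ifs
      exacts [Set.left_mem_Icc.2 zero_le_one, Set.right_mem_Icc.2 zero_le_one]
  refine ⟨R, isReachPotential_of_midrange_eq hp (fun x => (hR01 x).1) ?_ hR,
    isReachPotential_of_midrange_eq (fun x hx y hxy => not_congr (hp x hx y hxy))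
      (fun x => sub_nonneg.2 (hR01 x).2) ?_ fun x hx => by rw [midrange_const_sub, hR x hx]⟩
  · intro x hx hpx
    rw [hRrec x hx, if_neg hpx]
  · intro x hx hpx
    rw [hRrec x hx, if_pos (not_not.1 hpx), sub_zero]

end BiddingGame

theorem mp_min_memoryless_optimal_general {V : Type} [Fintype V] (G : BiddingGame V) (w : V → ℤ)
    (v : V) {B' B : ℝ} {tb' : TieBreak V} {f1' : Strat V} (hf1' : Legal1 G f1' B')
    (hwin : ∀ f2 : Strat V, Legal2 G f2 (1 - B') → mpval w tb' f1' f2 v ≤ 0) (hB : B' < B) :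
    ∃ f1 : Strat V, MemorylessE w f1 ∧ Legal1 G f1 B ∧
      ∀ (tb : TieBreak V) (f2 : Strat V), Legal2 G f2 (1 - B) → mpval w tb f1 f2 v ≤ 0 := by
  obtain ⟨W, ℓ, hWℓ⟩ := G.exists_ergodic_solution fun x => (w x : ℝ)
  obtain ⟨R, hRmin, hRmax⟩ := BiddingGame.exists_complementary_reachPotentials
    (p := fun x => ℓ x ≤ 0) fun x hx y hxy => by rw [(hWℓ x hx).2 y hxy]
  have hR : R v ≤ B' := by
    by_contra! hlt
    obtain ⟨f2, hf2, hf2win⟩ := hRmax.exists_mpval_pos (w := w) (W := fun x => 0 - W x)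
      (sub_lt_sub_left hlt 1) fun x hx => by
        rw [BiddingGame.midrange_const_sub]
        linarith [(hWℓ x hx.1).1, not_le.1 hx.2]
    have hpos := hf2win tb'.swap f1'.swap (by rw [sub_sub_cancel]; exact hf1'.swap)
    rw [← mpval_swap, TieBreak.swap_swap, Strat.swap_swap] at hpos
    exact hpos.not_ge (hwin _ hf2.swap)
  exact hRmin.exists_memorylessE_mpval_nonpos (hR.trans_lt hB) fun x hx =>
    (hWℓ x hx.1).1.trans_le (add_le_of_nonpos_right hx.2)

/-- In a mean-payoff bidding game, if Min's initial budget exceeds the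
threshold budget `Thresh(v) = t`, then Min has a *memoryless* strategy (its bid and
move depend only on the current vertex, Min's current budget, and the current energy
level) guaranteeing a nonpositive mean-payoff value from `v`. -/
theorem mp_min_memoryless_optimal
    {V : Type} [Fintype V] (G : BiddingGame V) (w : V → ℤ) (v : V) (t : ℝ)
    (ht : IsThreshMP G w v t) (B : ℝ) (hB1 : B ≤ 1) (hB : t < B)
    (tb : TieBreak V) :
    ∃ f1 : Strat V, MemorylessE w f1 ∧ Legal1 G f1 B ∧
      ∀ f2 : Strat V, Legal2 G f2 (1 - B) → mpval w tb f1 f2 v ≤ 0 := by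
  obtain ⟨B', htB', hB'⟩ := exists_between hB
  obtain ⟨f1', hf1', hwin⟩ := ht.1 B' (hB'.le.trans hB1) htB' tb
  obtain ⟨f1, hmem, hf1, hval⟩ := mp_min_memoryless_optimal_general G w v hf1' hwin hB'
  exact ⟨f1, hmem, hf1, hval tb⟩
end

section
/- Consider a mean-payoff bidding game G = (V, E, w) and a vertex v ∈ V. If Max's initial budget exceeds 1 − Thresh(v), then Max has a constant-memory strategy that guarantees a strictly positive mean-payoff value from v, that is, a strategy whose bid and chosen move at each round depend only on the current vertex, Max's current budget, the current energy level, and a memory state ranging over a finite set whose size is independent of the history. -/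
open scoped Classical

/-!
Call a position (vertex, budget of Max, energy) safe if Max can keep the energy nonnegative
forever. This is a greatest fixed point, so in a safe position Max has a single action that leads
to safe positions again. For the weights `w - δ`, acting at each vertex and budget as if the energy
were within `δ / 2` of the least safe one gives a memoryless strategy with average gain at least
`δ / 2`.

It remains to see that if Max wins with budget `B'`, then every budget `B > B'` is safe for some
`δ > 0` and some initial energy. Otherwise the initial position lies outside the set of pairs
(vertex, budget) with this property. From any position that Min has reached while staying outside
this set, and for each `k`, he can continue to stay outside until the average weight drops below
`1 / (k + 1)`: if not, the positions reachable while staying outside would form a safe region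
together with the safe positions entered upon leaving. Concatenating these continuations makes the
limit inferior of the averages nonpositive, so Max does not win with budget `B'`.
-/

section MeanPayoff

variable {V : Type} [Finite V] {w : V → ℤ} {tb : TieBreak V} {f1 f2 : Strat V} {v0 : V}

lemma exists_forall_abs_energy_div_le (w : V → ℤ) (tb : TieBreak V) (f1 f2 : Strat V) (v0 : V) :
    ∃ W : ℝ, ∀ n : ℕ, |(energy w tb f1 f2 v0 n : ℝ) / n| ≤ W := by
  obtain ⟨W, hW⟩ := Finite.exists_le fun v => |(w v : ℝ)|
  refine ⟨W, fun n => ?_⟩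
  rw [abs_div, Nat.abs_cast, energy, Int.cast_sum]
  refine div_le_of_le_mul₀ n.cast_nonneg ((abs_nonneg _).trans (hW v0)) ?_
  calc |∑ i ∈ Finset.range n, (w (visit tb f1 f2 v0 i) : ℝ)|
      ≤ ∑ i ∈ Finset.range n, |(w (visit tb f1 f2 v0 i) : ℝ)| := Finset.abs_sum_le_sum_abs _ _
    _ ≤ ∑ _i ∈ Finset.range n, W := Finset.sum_le_sum fun _ _ => hW _
    _ = W * n := by rw [Finset.sum_const, Finset.card_range, nsmul_eq_mul, mul_comm]

lemma le_mpval_of_forall_le_energy {c C : ℝ}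
    (h : ∀ n : ℕ, c * n - C ≤ energy w tb f1 f2 v0 n) : c ≤ mpval w tb f1 f2 v0 := by
  obtain ⟨W, hW⟩ := exists_forall_abs_energy_div_le w tb f1 f2 v0
  have hlim : Filter.Tendsto (fun n : ℕ => c - C / n) Filter.atTop (nhds c) := by
    simpa only [sub_zero] using
      (tendsto_const_nhds (x := c)).sub (tendsto_const_div_atTop_nhds_zero_nat C)
  rw [← hlim.liminf_eq]
  refine Filter.liminf_le_liminf ?_ hlim.isBoundedUnder_ge
    (Filter.isBoundedUnder_of ⟨W, fun n => (abs_le.1 (hW n)).2⟩).isCoboundedUnder_ge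
  filter_upwards [Filter.eventually_gt_atTop 0] with n hn
  have hn' : (0 : ℝ) < n := Nat.cast_pos.2 hn
  rw [le_div_iff₀ hn', sub_mul, div_mul_cancel₀ _ hn'.ne']
  exact h n

lemma mpval_nonpos_of_forall_exists_energy_div_le
    (h : ∀ k : ℕ, ∃ n ≥ k, (energy w tb f1 f2 v0 n : ℝ) / n ≤ 1 / (k + 1)) :
    mpval w tb f1 f2 v0 ≤ 0 := by
  obtain ⟨W, hW⟩ := exists_forall_abs_energy_div_le w tb f1 f2 v0
  refine le_of_forall_pos_le_add fun ε hε => ?_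
  rw [zero_add]
  refine Filter.liminf_le_of_frequently_le (Filter.frequently_atTop.2 fun m => ?_)
    (Filter.isBoundedUnder_of ⟨-W, fun n => (abs_le.1 (hW n)).1⟩)
  obtain ⟨K, hK⟩ := exists_nat_one_div_lt hε
  obtain ⟨n, hn, hE⟩ := h (max m K)
  exact ⟨n, (le_max_left m K).trans hn,
    hE.trans ((Nat.one_div_le_one_div (le_max_right m K)).trans hK.le)⟩

end MeanPayoff

section Round

variable {V : Type}

lemma extend_cases (tb : TieBreak V) (f1 f2 : Strat V) (h : Hist V) :
    ((f2 h).1 ≤ (f1 h).1 ∧ (extend tb f1 f2 h).cur = (f1 h).2 ∧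
      (extend tb f1 f2 h).pay1 = h.pay1 + (f1 h).1) ∨
    ((f1 h).1 ≤ (f2 h).1 ∧ (extend tb f1 f2 h).cur = (f2 h).2 ∧
      (extend tb f1 f2 h).pay1 = h.pay1 - (f2 h).1) := by
  by_cases hwin : (f2 h).1 < (f1 h).1 ∨ ((f1 h).1 = (f2 h).1 ∧ tb h = true)
  · refine Or.inl ⟨hwin.elim le_of_lt fun htie => htie.1.ge, ?_⟩
    simp [extend, hwin, Hist.cur, Hist.pay1]
  · refine Or.inr ⟨not_lt.1 fun hlt => hwin (Or.inl hlt), ?_⟩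
    simp [extend, hwin, Hist.cur, Hist.pay1, sub_eq_add_neg]

lemma length_rounds_extend (tb : TieBreak V) (f1 f2 : Strat V) (h : Hist V) :
    (extend tb f1 f2 h).rounds.length = h.rounds.length + 1 := by
  unfold extend
  split <;> exact List.length_append

lemma Memoryless.finiteMemory2 {f : Strat V} (hf : Memoryless f) (w : V → ℤ) (B : ℝ) :
    FiniteMemory2 w f B := by
  -- A one-round history with the given current vertex and budget represents all of them.
  refine ⟨Unit, inferInstance, (), fun m _ => m,
    fun u β _ _ => f ⟨u, [⟨u, β - B, true⟩]⟩, fun h => hf _ _ rfl ?_⟩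
  simp [Hist.pay1, Hist.pay2]

end Round

section Legal

variable {V : Type} [Fintype V] {G : BiddingGame V}

/-- At vertex `u`, a player with budget `β` may bid `a.1` and propose to move to `a.2`. -/
def BiddingGame.IsLegalAction (G : BiddingGame V) (β : ℝ) (u : V) (a : ℝ × V) : Prop :=
  0 ≤ a.1 ∧ a.1 ≤ β ∧ G.E u a.2

lemma legal1_of_forall_isLegalAction {f1 : Strat V} {B : ℝ} (hB : 0 ≤ B)
    (hf1 : ∀ h : Hist V, 0 ≤ B - h.pay1 → G.IsLegalAction (B - h.pay1) h.cur (f1 h)) :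
    Legal1 G f1 B := by
  intro tb f2 v0 n
  refine hf1 _ ?_
  induction n with
  | zero => simpa [play, Hist.pay1] using hB
  | succ n ih =>
    obtain ⟨hbid0, hbid, -⟩ := hf1 _ ih
    rcases extend_cases tb f1 f2 (play tb f1 f2 v0 n) with ⟨-, -, hpay⟩ | ⟨hle, -, hpay⟩ <;>
      rw [play, hpay] <;> linarith

lemma legal2_of_forall_isLegalAction {f2 : Strat V} {B : ℝ} (hB : 0 ≤ B)
    (hf2 : ∀ h : Hist V, 0 ≤ B - h.pay2 → G.IsLegalAction (B - h.pay2) h.cur (f2 h)) :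
    Legal2 G f2 B := by
  intro tb f1 v0 n
  refine hf2 _ ?_
  induction n with
  | zero => simpa [play, Hist.pay1, Hist.pay2] using hB
  | succ n ih =>
    obtain ⟨hbid0, hbid, -⟩ := hf2 _ ih
    rw [Hist.pay2] at hbid ⊢
    rcases extend_cases tb f1 f2 (play tb f1 f2 v0 n) with ⟨hle, -, hpay⟩ | ⟨-, -, hpay⟩ <;>
      rw [play, hpay] <;> linarith

/-- Whoever wins the round, Max's action `a` at vertex `u` with budget `B` leads to a vertex
and a budget of Max satisfying `Y`. Ties are counted as won by Min. -/
def BiddingGame.Ensures (G : BiddingGame V) (u : V) (B : ℝ) (a : ℝ × V)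
    (Y : V → ℝ → Prop) : Prop :=
  G.IsLegalAction B u a ∧ Y a.2 (B - a.1) ∧
    ∀ a', G.IsLegalAction (1 - B) u a' → a.1 ≤ a'.1 → Y a'.2 (B + a'.1)

namespace BiddingGame.Ensures

variable {u : V} {B : ℝ} {a : ℝ × V} {Y Y' : V → ℝ → Prop}

lemma imp (h : G.Ensures u B a Y) (hY : ∀ z β, Y z β → Y' z β) : G.Ensures u B a Y' :=
  ⟨h.1, hY _ _ h.2.1, fun a' ha' hle => hY _ _ (h.2.2 a' ha' hle)⟩

lemma add_budget {η : ℝ} (h : G.Ensures u B a fun z β => Y z (β + η)) (hη : 0 ≤ η) :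
    G.Ensures u (B + η) a Y := by
  obtain ⟨⟨hbid0, hbid, hedge⟩, hlose, hwin⟩ := h
  refine ⟨⟨hbid0, by linarith, hedge⟩, ?_, fun a' ⟨hbid0', hbid', hedge'⟩ hle => ?_⟩
  · rw [add_sub_right_comm]
    exact hlose
  · rw [add_right_comm]
    exact hwin a' ⟨hbid0', by linarith, hedge'⟩ hle

lemma of_extend {tb : TieBreak V} {f1 f2 : Strat V} {h : Hist V}
    (hY : G.Ensures h.cur (B - h.pay2) (f2 h) Y)
    (hf1 : G.IsLegalAction (1 - B - h.pay1) h.cur (f1 h)) :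
    Y (extend tb f1 f2 h).cur (B - (extend tb f1 f2 h).pay2) := by
  obtain ⟨-, hlose, hwin⟩ := hY
  simp only [Hist.pay2, sub_neg_eq_add] at hlose hwin ⊢
  rcases extend_cases tb f1 f2 h with ⟨hle, hcur, hpay⟩ | ⟨-, hcur, hpay⟩ <;> rw [hcur, hpay]
  · rw [← add_assoc]
    exact hwin (f1 h) (by rwa [← sub_sub]) hle
  · rwa [← add_sub_assoc]

end BiddingGame.Ensures

end Legal

section Safe

variable {V : Type} [Fintype V] {G : BiddingGame V} {c c' : V → ℝ} {u v : V} {B B' x x' ε : ℝ}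

/-- A set `X` of triples (vertex, budget of Max, energy) in which Max can remain forever, the
energy being nonnegative throughout; leaving vertex `u` adds `c u` to the energy. -/
def IsSafeRegion (G : BiddingGame V) (c : V → ℝ) (X : V → ℝ → ℝ → Prop) : Prop :=
  ∀ u B x, X u B x → 0 ≤ x ∧ ∃ a, G.Ensures u B a fun z β => X z β (x + c u)

/-- From vertex `u`, budget `B` and energy `x`, Max can keep the energy nonnegative forever.
This is the greatest safe region. -/
def Safe (G : BiddingGame V) (c : V → ℝ) (u : V) (B x : ℝ) : Prop :=
  ∃ X, IsSafeRegion G c X ∧ X u B x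

lemma isSafeRegion_safe (G : BiddingGame V) (c : V → ℝ) : IsSafeRegion G c (Safe G c) := by
  rintro u B x ⟨X, hX, hx⟩
  obtain ⟨hx0, a, ha⟩ := hX u B x hx
  exact ⟨hx0, a, ha.imp fun z β hz => ⟨X, hX, hz⟩⟩

lemma Safe.energy_nonneg (h : Safe G c u B x) : 0 ≤ x :=
  (isSafeRegion_safe G c u B x h).1

lemma Safe.budget_nonneg (h : Safe G c u B x) : 0 ≤ B := by
  obtain ⟨-, a, ⟨hbid0, hbid, -⟩, -⟩ := isSafeRegion_safe G c u B x h
  exact hbid0.trans hbid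

lemma Safe.mono (h : Safe G c u B x) (hc : c ≤ c') (hB : B ≤ B') (hx : x ≤ x') :
    Safe G c' u B' x' := by
  refine ⟨fun u B' x' => ∃ η x, 0 ≤ η ∧ x ≤ x' ∧ Safe G c u (B' - η) x, ?_,
    B' - B, x, sub_nonneg.2 hB, hx, by rwa [sub_sub_cancel]⟩
  rintro u B' x' ⟨η, x, hη, hx, h⟩
  obtain ⟨hx0, a, ha⟩ := isSafeRegion_safe G c _ _ _ h
  refine ⟨hx0.trans hx, a, ?_⟩
  rw [← sub_add_cancel B' η]
  refine (ha.imp fun z β hz => ?_).add_budget hη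
  exact ⟨η, _, hη, add_le_add hx (hc u), by rwa [add_sub_cancel_right]⟩

-- The action is chosen at a nearly minimal safe energy, so that it serves all safe energies.
lemma exists_action_forall_safe (G : BiddingGame V) (c : V → ℝ) (hε : 0 < ε) (u : V) (B : ℝ) :
    ∃ a, (0 ≤ B → G.IsLegalAction B u a) ∧
      ∀ x, Safe G c u B x → G.Ensures u B a fun z β => Safe G c z β (x + c u + ε) := by
  by_cases hne : {x | Safe G c u B x}.Nonempty
  · obtain ⟨y, hy, hlt⟩ := exists_lt_of_csInf_lt hne (lt_add_of_pos_right _ hε)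
    obtain ⟨-, a, ha⟩ := isSafeRegion_safe G c u B y hy
    refine ⟨a, fun _ => ha.1, fun x hx => ha.imp fun z β hz => hz.mono le_rfl le_rfl ?_⟩
    have hInf : sInf {x | Safe G c u B x} ≤ x := csInf_le ⟨0, fun _ h => h.energy_nonneg⟩ hx
    linarith
  · obtain ⟨z, hz⟩ := G.total u
    exact ⟨(0, z), fun hB => ⟨le_rfl, hB, hz⟩, fun x hx => (hne ⟨x, hx⟩).elim⟩

lemma Safe.exists_memoryless (hs : Safe G c v B x) (hε : 0 < ε) :
    ∃ f2 : Strat V, Memoryless f2 ∧ Legal2 G f2 B ∧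
      ∀ (tb : TieBreak V) (f1 : Strat V), Legal1 G f1 (1 - B) → ∀ n : ℕ,
        0 ≤ x + ∑ i ∈ Finset.range n, (c (visit tb f1 f2 v i) + ε) := by
  choose a ha_legal ha using exists_action_forall_safe G c hε
  let f2 : Strat V := fun h => a h.cur (B - h.pay2)
  refine ⟨f2, fun h h' hcur hpay => ?_,
    legal2_of_forall_isLegalAction hs.budget_nonneg fun h => ha_legal _ _, fun tb f1 hf1 n => ?_⟩
  · simp only [f2, Hist.pay2, hcur, hpay]
  suffices hsafe : Safe G c (visit tb f1 f2 v n) (B - (play tb f1 f2 v n).pay2)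
      (x + ∑ i ∈ Finset.range n, (c (visit tb f1 f2 v i) + ε)) from hsafe.energy_nonneg
  induction n with
  | zero => simpa [visit, play, Hist.cur, Hist.pay2, Hist.pay1] using hs
  | succ n ih =>
    rw [Finset.sum_range_succ, ← add_assoc, ← add_assoc]
    exact (ha _ _ _ ih).of_extend (f2 := f2) (hf1 tb f2 v n)

/-- From vertex `u` with budget `B`, Max can make the accumulated weight grow at some positive
rate `δ`, up to an additive constant `x`. -/
def PositiveDrift (G : BiddingGame V) (c : V → ℝ) (u : V) (B : ℝ) : Prop :=
  ∃ δ > 0, ∃ x, Safe G (fun z => c z - δ) u B x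

/-- The closure of `PositiveDrift` in the budget: neither the rate nor the constant need be
uniform as `B'` decreases to `B`. -/
def PositiveDriftAbove (G : BiddingGame V) (c : V → ℝ) (u : V) (B : ℝ) : Prop :=
  ∀ B' > B, PositiveDrift G c u B'

lemma PositiveDrift.exists_memoryless {w : V → ℤ} (h : PositiveDrift G (fun z => (w z : ℝ)) v B) :
    ∃ f2 : Strat V, Memoryless f2 ∧ Legal2 G f2 B ∧
      ∀ (tb : TieBreak V) (f1 : Strat V), Legal1 G f1 (1 - B) → 0 < mpval w tb f1 f2 v := by
  obtain ⟨δ, hδ, x, hs⟩ := h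
  obtain ⟨f2, hmem, hlegal, hsafe⟩ := hs.exists_memoryless (half_pos hδ)
  refine ⟨f2, hmem, hlegal, fun tb f1 hf1 =>
    (half_pos hδ).trans_le (le_mpval_of_forall_le_energy (C := x) fun n => ?_)⟩
  have hn := hsafe tb f1 hf1 n
  simp only [Finset.sum_add_distrib, Finset.sum_sub_distrib, Finset.sum_const, Finset.card_range,
    nsmul_eq_mul] at hn
  rw [energy, Int.cast_sum]
  linarith

lemma PositiveDriftAbove.eventually_safe_at (G : BiddingGame V) (c : V → ℝ) (u : V)
    {η : ℝ} (hη : 0 < η) :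
    ∀ᶠ δ in nhdsWithin 0 (Set.Ioi 0), ∀ᶠ x in Filter.atTop, ∀ B, PositiveDriftAbove G c u B →
      Safe G (fun z => c z - δ) u (B + η) x := by
  by_cases hne : {B | PositiveDrift G c u B}.Nonempty
  · obtain ⟨B₁, ⟨δ₁, hδ₁, x₁, hs⟩, hlt⟩ :=
      exists_lt_of_csInf_lt hne (lt_add_of_pos_right _ hη)
    filter_upwards [Ioc_mem_nhdsGT hδ₁] with δ hδ
    filter_upwards [Filter.eventually_ge_atTop x₁] with x hx B hB
    refine hs.mono (fun z => sub_le_sub_left hδ.2 _) (hlt.le.trans ?_) hx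
    have hbdd : BddBelow {B | PositiveDrift G c u B} := ⟨0, fun _ ⟨_, _, _, h⟩ => h.budget_nonneg⟩
    have hInf : sInf {B | PositiveDrift G c u B} ≤ sInf (Set.Ioi B) :=
      csInf_le_csInf hbdd Set.nonempty_Ioi hB
    rw [csInf_Ioi] at hInf
    linarith
  · exact .of_forall fun δ => .of_forall fun x B hB => (hne ⟨B + 1, hB _ (lt_add_one B)⟩).elim

lemma PositiveDriftAbove.eventually_safe (G : BiddingGame V) (c : V → ℝ) {η : ℝ} (hη : 0 < η) :
    ∀ᶠ δ in nhdsWithin 0 (Set.Ioi 0), ∀ᶠ x in Filter.atTop, ∀ u B, PositiveDriftAbove G c u B →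
      Safe G (fun z => c z - δ) u (B + η) x := by
  filter_upwards [Filter.eventually_all.2 fun u => eventually_safe_at G c u hη] with δ hδ
  exact Filter.eventually_all.2 hδ

end Safe

section Sequences

variable {α : Type*}

open PiNat (res)

lemma res_suffix_res (x : ℕ → α) {m n : ℕ} (h : m ≤ n) : res x m <:+ res x n :=
  Nat.rel_of_forall_rel_succ_of_le (· <:+ ·) (fun n => List.suffix_cons (x n) (res x n)) h

lemma exists_res_length_eq_of_isChain [Nonempty α] {S : Set (List α)}
    (hS : IsChain (· <:+ ·) S) : ∃ x : ℕ → α, ∀ l ∈ S, res x l.length = l := by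
  have unique_entry : ∀ n, ∃ a : α, ∀ l ∈ S, ∀ b t, b :: t <:+ l → t.length = n → b = a := by
    intro n
    by_cases hne : ∃ l ∈ S, ∃ a t, a :: t <:+ l ∧ t.length = n
    · obtain ⟨l, hl, a, t, hat, rfl⟩ := hne
      refine ⟨a, fun l' hl' b t' hbt hlen => ?_⟩
      have hsuffix : ∃ l'', a :: t <:+ l'' ∧ b :: t' <:+ l'' :=
        (hS.total hl hl').elim (fun h => ⟨l', hat.trans h, hbt⟩) fun h => ⟨l, hat, hbt.trans h⟩
      obtain ⟨l'', ha, hb⟩ := hsuffix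
      have heq := (List.suffix_of_suffix_length_le hb ha (by simp [hlen])).eq_of_length
        (by simp [hlen])
      exact (List.cons.inj heq).1
    · exact ⟨Classical.arbitrary α, fun l hl b t hbt hlen => (hne ⟨l, hl, b, t, hbt, hlen⟩).elim⟩
  choose x hx using unique_entry
  refine ⟨x, fun l hl => ?_⟩
  suffices ∀ t, t <:+ l → res x t.length = t from this l List.suffix_rfl
  intro t ht
  induction t with
  | nil => rfl
  | cons b t ih =>
    rw [List.length_cons, PiNat.res_succ, ih ((List.suffix_cons b t).trans ht),
      hx _ l hl b t ht rfl]

lemma exists_forall_res_of_forall_exists_suffix [Nonempty α] {T : List α → Prop}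
    {P : ℕ → List α → Prop} (hnil : T [])
    (hT : ∀ l m, l <:+ m → T m → T l)
    (hP : ∀ k l, T l → ∃ m, l <:+ m ∧ T m ∧ k ≤ m.length ∧ P k m) :
    ∃ x : ℕ → α, ∀ k, T (res x k) ∧ ∃ n ≥ k, P k (res x n) := by
  choose ext hsuffix hmem hlen hgoal using fun k (l : {l // T l}) => hP k l l.2
  let g : ℕ → {l // T l} := fun n =>
    Nat.rec ⟨[], hnil⟩ (fun k l => ⟨ext k l, hmem k l⟩) n
  have hchain : ∀ i j, i ≤ j → (g i).1 <:+ (g j).1 := fun i j hij =>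
    Nat.rel_of_forall_rel_succ_of_le (· <:+ ·) (f := fun k => (g k).1)
      (fun k => hsuffix k (g k)) hij
  obtain ⟨x, hx⟩ := exists_res_length_eq_of_isChain (S := Set.range fun k => (g k).1) <| by
    rintro _ ⟨i, rfl⟩ _ ⟨j, rfl⟩ -
    exact (le_total i j).imp (hchain i j) (hchain j i)
  have hres : ∀ k, res x (ext k (g k)).length = ext k (g k) := fun k => hx _ ⟨k + 1, rfl⟩
  refine ⟨x, fun k => ⟨hT _ _ (res_suffix_res x (hlen k (g k))) ?_, _, hlen k (g k), ?_⟩⟩ <;>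
    rw [hres]
  · exact hmem k (g k)
  · exact hgoal k (g k)

end Sequences

section Run

variable {V : Type} {f1 f2 : Strat V} {v0 : V}

/-- The tie-breaking mechanism that favours Player 1. -/
def TieBreak.first : TieBreak V := fun _ => true

/-- The strategy that always plays `a`, used to describe a single round in which Min plays `a`. -/
def Strat.const (a : ℝ × V) : Strat V := fun _ => a

/-- The history after Min has played a list of actions against Max's strategy `f2`, Min winning
all ties. The latest action comes first in the list, as in `PiNat.res`. -/
noncomputable def Strat.run (f2 : Strat V) (v0 : V) : List (ℝ × V) → Hist V
  | [] => ⟨v0, []⟩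
  | a :: l => extend TieBreak.first (Strat.const a) f2 (f2.run v0 l)

/-- The accumulated weight along `Strat.run`, without the current vertex. -/
noncomputable def Strat.runEnergy (c : V → ℝ) (f2 : Strat V) (v0 : V) : List (ℝ × V) → ℝ
  | [] => 0
  | _ :: l => f2.runEnergy c v0 l + c (f2.run v0 l).cur

lemma length_rounds_run (f2 : Strat V) (v0 : V) (l : List (ℝ × V)) :
    (f2.run v0 l).rounds.length = l.length := by
  induction l with
  | nil => rfl
  | cons a l ih => rw [Strat.run, length_rounds_extend, ih, List.length_cons]

lemma abs_runEnergy_le {c : V → ℝ} {W : ℝ} (hW : ∀ v, |c v| ≤ W) (f2 : Strat V) (v0 : V)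
    (l : List (ℝ × V)) : |f2.runEnergy c v0 l| ≤ W * l.length := by
  induction l with
  | nil => simp [Strat.runEnergy]
  | cons a l ih =>
    calc |f2.runEnergy c v0 l + c (f2.run v0 l).cur|
        ≤ |f2.runEnergy c v0 l| + |c (f2.run v0 l).cur| := abs_add_le _ _
      _ ≤ W * l.length + W := add_le_add ih (hW _)
      _ = W * (a :: l).length := by push_cast [List.length_cons]; ring

lemma Strat.runEnergy_sub_const (c : V → ℝ) (δ : ℝ) (f2 : Strat V) (v0 : V)
    (l : List (ℝ × V)) :
    f2.runEnergy (fun z => c z - δ) v0 l = f2.runEnergy c v0 l - δ * l.length := by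
  induction l with
  | nil => simp [Strat.runEnergy]
  | cons a l ih =>
    rw [Strat.runEnergy, Strat.runEnergy, ih, List.length_cons]
    push_cast
    ring

lemma play_eq_run {x : ℕ → ℝ × V} (hf1 : ∀ n, f1 (f2.run v0 (PiNat.res x n)) = x n) (n : ℕ) :
    play TieBreak.first f1 f2 v0 n = f2.run v0 (PiNat.res x n) := by
  induction n with
  | zero => rfl
  | succ n ih => rw [play, ih, PiNat.res_succ, Strat.run, ← hf1 n]; rfl

lemma energy_eq_runEnergy (w : V → ℤ) {x : ℕ → ℝ × V}
    (hf1 : ∀ n, f1 (f2.run v0 (PiNat.res x n)) = x n) (n : ℕ) :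
    (energy w TieBreak.first f1 f2 v0 n : ℝ) =
      f2.runEnergy (fun v => (w v : ℝ)) v0 (PiNat.res x n) := by
  induction n with
  | zero => simp [energy, Strat.runEnergy]
  | succ n ih =>
    rw [PiNat.res_succ, Strat.runEnergy, ← ih, ← play_eq_run hf1 n, energy,
      Finset.sum_range_succ, Int.cast_add]
    rfl

lemma exists_play_eq_run (f2 : Strat V) (v0 : V) (l : List (ℝ × V)) :
    ∃ f1, play TieBreak.first f1 f2 v0 l.length = f2.run v0 l := by
  have : Nonempty V := ⟨v0⟩
  obtain ⟨x, hx⟩ := exists_res_length_eq_of_isChain (IsChain.singleton (r := (· <:+ ·)) (a := l))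
  let f1 : Strat V := fun h => x h.rounds.length
  have hf1 : ∀ n, f1 (f2.run v0 (PiNat.res x n)) = x n := fun n => by
    simp only [f1, length_rounds_run, PiNat.res_length]
  exact ⟨f1, by rw [play_eq_run hf1, hx l rfl]⟩

lemma extend_first_of_le {h : Hist V} (hle : (f2 h).1 ≤ (f1 h).1) :
    (extend TieBreak.first f1 f2 h).cur = (f1 h).2 ∧
      (extend TieBreak.first f1 f2 h).pay1 = h.pay1 + (f1 h).1 := by
  have hwin : (f2 h).1 < (f1 h).1 ∨ ((f1 h).1 = (f2 h).1 ∧ TieBreak.first h = true) :=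
    hle.lt_or_eq.imp_right fun htie => ⟨htie.symm, rfl⟩
  simp [extend, hwin, Hist.cur, Hist.pay1]

variable [Fintype V] {G : BiddingGame V} {B : ℝ}

lemma Legal2.isLegalAction_run (hf2 : Legal2 G f2 B) (v0 : V) (l : List (ℝ × V)) :
    G.IsLegalAction (B - (f2.run v0 l).pay2) (f2.run v0 l).cur (f2 (f2.run v0 l)) := by
  obtain ⟨f1, h⟩ := exists_play_eq_run f2 v0 l
  rw [← h]
  exact hf2 TieBreak.first f1 v0 l.length

lemma BiddingGame.Ensures.of_forall_extend_first {h : Hist V} {Y : V → ℝ → Prop}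
    (hB : 0 ≤ 1 - B - h.pay1) (hf2 : G.IsLegalAction (B - h.pay2) h.cur (f2 h))
    (hY : ∀ a, G.IsLegalAction (1 - B - h.pay1) h.cur a →
      Y (extend TieBreak.first (Strat.const a) f2 h).cur
        (B - (extend TieBreak.first (Strat.const a) f2 h).pay2)) :
    G.Ensures h.cur (B - h.pay2) (f2 h) Y := by
  simp only [Hist.pay2, sub_neg_eq_add] at hf2 hY ⊢
  refine ⟨hf2, ?_, fun a ⟨hbid0, hbid, hedge⟩ hle => ?_⟩
  · -- Min bids 0 and copies Max's move, so that Max's action takes effect even upon a tie.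
    have hcopy := hY (0, (f2 h).2) ⟨le_rfl, hB, hf2.2.2⟩
    rcases extend_cases TieBreak.first (.const (0, (f2 h).2)) f2 h with
      ⟨hle, hcur, hpay⟩ | ⟨-, hcur, hpay⟩
    · have hbid : (f2 h).1 = 0 := le_antisymm hle hf2.1
      rw [hcur, hpay] at hcopy
      simpa [hbid, Strat.const] using hcopy
    · rwa [hcur, hpay, ← add_sub_assoc] at hcopy
  · have hwin := hY a ⟨hbid0, by linarith, hedge⟩
    obtain ⟨hcur, hpay⟩ := extend_first_of_le (f1 := .const a) hle
    rwa [hcur, hpay, ← add_assoc] at hwin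

end Run

section Evasion

variable {V : Type} [Fintype V] {G : BiddingGame V} {Q : V → ℝ → Prop} {c : V → ℝ}
  {f2 : Strat V} {v0 : V} {B : ℝ} {l m : List (ℝ × V)}

/-- Against `f2` with initial budget `B`, Min's list of actions (latest first) is legal and keeps
the pair (vertex, budget of Max) outside `Q` at all times. -/
inductive Evades (G : BiddingGame V) (Q : V → ℝ → Prop) (f2 : Strat V) (B : ℝ) (v0 : V) :
    List (ℝ × V) → Prop
  | nil (hQ : ¬ Q v0 B) : Evades G Q f2 B v0 []
  | cons {a : ℝ × V} {l : List (ℝ × V)} (hl : Evades G Q f2 B v0 l)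
      (ha : G.IsLegalAction (1 - B - (f2.run v0 l).pay1) (f2.run v0 l).cur a)
      (hQ : ¬ Q (f2.run v0 (a :: l)).cur (B - (f2.run v0 (a :: l)).pay2)) :
      Evades G Q f2 B v0 (a :: l)

namespace Evades

lemma not_apply_run (hl : Evades G Q f2 B v0 l) :
    ¬ Q (f2.run v0 l).cur (B - (f2.run v0 l).pay2) := by
  cases hl with
  | nil hQ => simpa [Strat.run, Hist.cur, Hist.pay2, Hist.pay1] using hQ
  | cons _ _ hQ => exact hQ

lemma of_suffix (hm : Evades G Q f2 B v0 m) (h : l <:+ m) : Evades G Q f2 B v0 l := by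
  induction hm with
  | nil hQ => rw [List.suffix_nil.1 h]; exact nil hQ
  | cons hm ha hQ ih =>
    rcases List.suffix_cons_iff.1 h with rfl | h
    · exact hm.cons ha hQ
    · exact ih h

lemma budget_nonneg (hl : Evades G Q f2 B v0 l) (hB : B ≤ 1) (hf2 : Legal2 G f2 B) :
    0 ≤ 1 - B - (f2.run v0 l).pay1 := by
  induction hl with
  | nil => simpa [Strat.run, Hist.pay1] using hB
  | @cons a l _ ha _ ih =>
    obtain ⟨hbid2, -⟩ := hf2.isLegalAction_run v0 l
    obtain ⟨-, hbid1, -⟩ := ha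
    rcases extend_cases TieBreak.first (.const a) f2 (f2.run v0 l) with
      ⟨-, -, hpay⟩ | ⟨-, -, hpay⟩ <;>
      simp only [Strat.run, hpay, Strat.const] <;> linarith

-- The evading positions with their current energies form, together with the safe positions,
-- a safe region.
lemma safe_of_forall_extension {η x₀ C : ℝ} (hl : Evades G Q f2 B v0 l) (hB : B ≤ 1)
    (hf2 : Legal2 G f2 B) (hη : 0 ≤ η)
    (hsafe : ∀ x, x₀ ≤ x → ∀ u β, Q u β → Safe G c u (β + η) x)
    (hbound : ∀ m, l <:+ m → Evades G Q f2 B v0 m →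
      0 ≤ C + f2.runEnergy c v0 m ∧ x₀ ≤ C + f2.runEnergy c v0 m + c (f2.run v0 m).cur) :
    Safe G c (f2.run v0 l).cur (B - (f2.run v0 l).pay2 + η) (C + f2.runEnergy c v0 l) := by
  refine ⟨fun u β x => Safe G c u β x ∨ ∃ m, l <:+ m ∧ Evades G Q f2 B v0 m ∧
    (f2.run v0 m).cur = u ∧ B - (f2.run v0 m).pay2 + η = β ∧ C + f2.runEnergy c v0 m = x,
    ?_, Or.inr ⟨l, List.suffix_rfl, hl, rfl, rfl, rfl⟩⟩
  rintro _ _ _ (hs | ⟨m, hlm, hm, rfl, rfl, rfl⟩)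
  · obtain ⟨hx, a, ha⟩ := isSafeRegion_safe G c _ _ _ hs
    exact ⟨hx, a, ha.imp fun z β => Or.inl⟩
  obtain ⟨henergy, hx₀⟩ := hbound m hlm hm
  refine ⟨henergy, f2 (f2.run v0 m), (BiddingGame.Ensures.of_forall_extend_first
    (hm.budget_nonneg hB hf2) (hf2.isLegalAction_run v0 m) fun a ha => ?_).add_budget hη⟩
  by_cases hQ : Q (f2.run v0 (a :: m)).cur (B - (f2.run v0 (a :: m)).pay2)
  · exact Or.inl (hsafe _ hx₀ _ _ hQ)
  · exact Or.inr ⟨a :: m, hlm.trans (List.suffix_cons a m), hm.cons ha hQ, rfl, rfl,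
      (add_assoc _ _ _).symm⟩

lemma exists_extension_runEnergy_lt {δ₀ : ℝ} (hl : Evades G (PositiveDriftAbove G c) f2 B v0 l)
    (hB : B ≤ 1) (hf2 : Legal2 G f2 B) (hδ₀ : 0 < δ₀) (e : ℝ) :
    ∃ m, l <:+ m ∧ Evades G (PositiveDriftAbove G c) f2 B v0 m ∧
      f2.runEnergy c v0 m < e + δ₀ * m.length := by
  by_contra! hhigh
  refine hl.not_apply_run fun B' hB' => ?_
  obtain ⟨δ, hsafe, hδ, hδ_le⟩ :=
    ((PositiveDriftAbove.eventually_safe G c (sub_pos.2 hB')).and (Ioc_mem_nhdsGT hδ₀)).exists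
  obtain ⟨x₀, hx₀⟩ := Filter.eventually_atTop.1 hsafe
  obtain ⟨W, hW⟩ := Finite.exists_le fun v => |c v|
  refine ⟨δ, hδ, |x₀| + W + δ - e + f2.runEnergy (fun z => c z - δ) v0 l, ?_⟩
  rw [← add_sub_cancel (B - (f2.run v0 l).pay2) B']
  refine hl.safe_of_forall_extension hB hf2 (sub_pos.2 hB').le hx₀ fun m hlm hm => ?_
  have hm_high := hhigh m hlm hm
  have hrate : δ * m.length ≤ δ₀ * m.length := by gcongr
  have hW_cur := abs_le.1 (hW (f2.run v0 m).cur)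
  have hx₀_abs := le_abs_self x₀
  have hx₀_nonneg := abs_nonneg x₀
  rw [Strat.runEnergy_sub_const]
  constructor <;> linarith

lemma exists_extension_average_le (hl : Evades G (PositiveDriftAbove G c) f2 B v0 l)
    (hB : B ≤ 1) (hf2 : Legal2 G f2 B) (k : ℕ) :
    ∃ m, l <:+ m ∧ Evades G (PositiveDriftAbove G c) f2 B v0 m ∧ k ≤ m.length ∧
      f2.runEnergy c v0 m / m.length ≤ 1 / (k + 1) := by
  obtain ⟨W, hW⟩ := Finite.exists_le fun v => |c v|
  have hW0 : 0 ≤ W := (abs_nonneg _).trans (hW v0)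
  have hδ₀ : (0 : ℝ) < 1 / (k + 1) := Nat.one_div_pos_of_nat
  obtain ⟨m, hlm, hm, hlow⟩ :=
    hl.exists_extension_runEnergy_lt hB hf2 hδ₀ (-((W + 1 / (k + 1)) * k))
  refine ⟨m, hlm, hm, ?_, div_le_of_le_mul₀ m.length.cast_nonneg hδ₀.le ?_⟩
  · have hlower := (abs_le.1 (abs_runEnergy_le hW f2 v0 m)).1
    have hmul : (W + 1 / (k + 1)) * (k : ℝ) ≤ (W + 1 / (k + 1)) * m.length := by linarith
    exact_mod_cast le_of_mul_le_mul_left hmul (add_pos_of_nonneg_of_pos hW0 hδ₀)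
  · have : 0 ≤ (W + 1 / (k + 1)) * (k : ℝ) := by positivity
    linarith

end Evades

lemma exists_legal1_eq_of_evades (hB : B ≤ 1) {x : ℕ → ℝ × V}
    (hx : ∀ n, Evades G Q f2 B v0 (PiNat.res x n)) :
    ∃ f1, Legal1 G f1 (1 - B) ∧ ∀ n, f1 (f2.run v0 (PiNat.res x n)) = x n := by
  choose next hnext using G.total
  let f1 : Strat V := fun h =>
    if G.IsLegalAction (1 - B - h.pay1) h.cur (x h.rounds.length) then x h.rounds.length
    else (0, next h.cur)
  refine ⟨f1, legal1_of_forall_isLegalAction (sub_nonneg.2 hB) fun h hβ => ?_, fun n => ?_⟩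
  · by_cases ha : G.IsLegalAction (1 - B - h.pay1) h.cur (x h.rounds.length)
    · simpa only [f1, if_pos ha] using ha
    · simpa only [f1, if_neg ha] using ⟨le_rfl, hβ, hnext h.cur⟩
  · cases hx (n + 1) with
    | cons _ ha _ => simp only [f1, length_rounds_run, PiNat.res_length, if_pos ha]

lemma positiveDriftAbove_of_forall_mpval_pos {w : V → ℤ} (hB : B ≤ 1) (hf2 : Legal2 G f2 B)
    (hwin : ∀ f1, Legal1 G f1 (1 - B) → 0 < mpval w TieBreak.first f1 f2 v0) :
    PositiveDriftAbove G (fun z => (w z : ℝ)) v0 B := by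
  by_contra hnot
  have : Nonempty V := ⟨v0⟩
  obtain ⟨x, hx⟩ := exists_forall_res_of_forall_exists_suffix
    (T := Evades G (PositiveDriftAbove G fun z => (w z : ℝ)) f2 B v0)
    (P := fun k m => f2.runEnergy (fun z => (w z : ℝ)) v0 m / m.length ≤ 1 / (k + 1))
    (.nil hnot) (fun _ _ hlm hm => hm.of_suffix hlm)
    (fun k _ hl => hl.exists_extension_average_le hB hf2 k)
  obtain ⟨f1, hf1, hf1x⟩ := exists_legal1_eq_of_evades hB fun n => (hx n).1
  refine (hwin f1 hf1).not_ge (mpval_nonpos_of_forall_exists_energy_div_le fun k => ?_)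
  obtain ⟨n, hn, hlow⟩ := (hx k).2
  refine ⟨n, hn, ?_⟩
  rwa [PiNat.res_length, ← energy_eq_runEnergy w hf1x] at hlow

end Evasion

theorem mp_max_constant_memory_optimal_general {V : Type} [Fintype V] {G : BiddingGame V}
    {w : V → ℤ} {v : V} {B' B : ℝ} (hwin : MaxWinsFrom G w v B') (hB' : B' ≤ 1) (hB'B : B' < B) :
    ∃ f2 : Strat V, Memoryless f2 ∧ Legal2 G f2 B ∧
      ∀ (tb : TieBreak V) (f1 : Strat V), Legal1 G f1 (1 - B) → 0 < mpval w tb f1 f2 v := by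
  obtain ⟨f2, hf2, hpos⟩ := hwin TieBreak.first
  exact (positiveDriftAbove_of_forall_mpval_pos hB' hf2 hpos B hB'B).exists_memoryless

/-- In a mean-payoff bidding game, if Max's initial budget exceeds
`1 - Thresh(v) = 1 - t`, then Max has a *constant-memory* strategy (its bid and move
depend only on the current vertex, Max's current budget, the current energy level, and
a memory state ranging over a finite set whose size is independent of the history)
guaranteeing a strictly positive mean-payoff value from `v`. -/
theorem mp_max_constant_memory_optimal
    {V : Type} [Fintype V] (G : BiddingGame V) (w : V → ℤ) (v : V) (t : ℝ)
    (ht : IsThreshMP G w v t) (B : ℝ) (hB1 : B ≤ 1) (hB : 1 - t < B)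
    (tb : TieBreak V) :
    ∃ f2 : Strat V, FiniteMemory2 w f2 B ∧ Legal2 G f2 B ∧
      ∀ f1 : Strat V, Legal1 G f1 (1 - B) → 0 < mpval w tb f1 f2 v := by
  obtain ⟨B', hB', hB'B⟩ := exists_between hB
  have hB'1 : B' ≤ 1 := hB'B.le.trans hB1
  obtain ⟨f2, hmem, hlegal, hwin⟩ :=
    mp_max_constant_memory_optimal_general (ht.2 B' hB'1 hB') hB'1 hB'B
  exact ⟨f2, hmem.finiteMemory2 w B, hlegal, hwin tb⟩
end
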